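/- Let φ : ℙ¹ → ℙ¹ be a rational map of degree d ≥ 2 defined over a number field K, with good reduction outside a finite set of places S of K containing all archimedean ones. If there exist three distinct K-rational points such that each point is either a tail point of φ or belongs to a critical cycle of φ, then the number of K-rational periodic points of φ satisfies |Per(φ,K)| ≤ 3·7^{4|S|} + 3. -/

import Mathlib

open NumberField IsDedekindDomain MvPolynomial
open scoped Classical nonZeroDivisors

set_option synthInstance.maxHeartbeats 1000000
set_option maxHeartbeats 1000000

noncomputable section

/-- The projective line over `K`. -/
abbrev P1 (K : Type*) [Field K] := Projectivization K (Fin 2 → K)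

variable {K : Type*} [Field K] [NumberField K]

/-- The additive `v`-adic valuation (order) of `x ∈ K`, with junk value `0` at `x = 0`,
normalized so that it is surjective onto `ℤ`. -/
def ordAt (v : HeightOneSpectrum (𝓞 K)) (x : K) : ℤ :=
  if hx : x = 0 then 0
  else - Multiplicative.toAdd (WithZero.unzero ((v.valuation K).ne_zero_iff.mpr hx))

/-- `min (v(x), v(y))` for a pair of coordinates, not both zero. -/
def minOrd (v : HeightOneSpectrum (𝓞 K)) (x y : K) : ℤ :=
  if x = 0 then ordAt v y else if y = 0 then ordAt v x else min (ordAt v x) (ordAt v y)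

/-- The `v`-adic logarithmic distance between two points of `ℙ¹(K)`:
`δ_v(P,Q) = v(x₁y₂ - x₂y₁) - min(v x₁, v y₁) - min(v x₂, v y₂)`, with value `⊤` when `P = Q`
(it is independent of the choice of homogeneous coordinates, so we compute it on the chosen
representatives). -/
def logDist (v : HeightOneSpectrum (𝓞 K)) (P Q : P1 K) : WithTop ℤ :=
  if P = Q then ⊤
  else ((ordAt v (P.rep 0 * Q.rep 1 - P.rep 1 * Q.rep 0)
        - minOrd v (P.rep 0) (P.rep 1) - minOrd v (Q.rep 0) (Q.rep 1) : ℤ) : WithTop ℤ)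

/-- An endomorphism of `ℙ¹` of degree `d` defined over `K`, given by a pair of homogeneous
forms of degree `d` with no common zero over the algebraic closure, together with the induced
self-map of `ℙ¹(K)`. -/
structure P1Map (K : Type*) [Field K] (d : ℕ) where
  toFun : P1 K → P1 K
  F : MvPolynomial (Fin 2) K
  G : MvPolynomial (Fin 2) K
  homF : F.IsHomogeneous d
  homG : G.IsHomogeneous d
  coprime : ∀ x y : AlgebraicClosure K,
    aeval ![x, y] F = 0 → aeval ![x, y] G = 0 → x = 0 ∧ y = 0
  compat : ∀ (x y : K) (hxy : ![x, y] ≠ 0)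
    (h : ![eval ![x, y] F, eval ![x, y] G] ≠ 0),
    toFun (Projectivization.mk K ![x, y] hxy) =
      Projectivization.mk K ![eval ![x, y] F, eval ![x, y] G] h

variable {d : ℕ}

/-- `φ` has good reduction at the finite place `v`: some representing pair of forms has
coefficients in the valuation ring at `v`, not all in the maximal ideal, and the reductions
of the two forms modulo `v` have no common zero in `ℙ¹` of the algebraic closure of the
residue field. -/
def GoodReductionAt (φ : P1Map K d) (v : HeightOneSpectrum (𝓞 K)) : Prop :=
  ∃ c : K, c ≠ 0 ∧
    ∃ F₀ G₀ : MvPolynomial (Fin 2) (v.valuation (K := K)).valuationSubring,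
      MvPolynomial.map ((v.valuation (K := K)).valuationSubring.subtype) F₀ = C c * φ.F ∧
      MvPolynomial.map ((v.valuation (K := K)).valuationSubring.subtype) G₀ = C c * φ.G ∧
      ((∃ m, F₀.coeff m ∉ IsLocalRing.maximalIdeal (v.valuation (K := K)).valuationSubring) ∨
        (∃ m, G₀.coeff m ∉ IsLocalRing.maximalIdeal (v.valuation (K := K)).valuationSubring)) ∧
      ∀ x y : AlgebraicClosure
          (IsLocalRing.ResidueField (v.valuation (K := K)).valuationSubring),
        eval ![x, y] (MvPolynomial.map
          ((algebraMap (IsLocalRing.ResidueField (v.valuation (K := K)).valuationSubring)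
              (AlgebraicClosure _)).comp
            (IsLocalRing.residue _)) F₀) = 0 →
        eval ![x, y] (MvPolynomial.map
          ((algebraMap (IsLocalRing.ResidueField (v.valuation (K := K)).valuationSubring)
              (AlgebraicClosure _)).comp
            (IsLocalRing.residue _)) G₀) = 0 →
        x = 0 ∧ y = 0

/-- `φ` has good reduction outside `S`, where `S` consists of all archimedean places together
with the finite places in `T`. -/
def GoodReductionOutside (φ : P1Map K d) (T : Finset (HeightOneSpectrum (𝓞 K))) : Prop :=
  ∀ v ∉ T, GoodReductionAt φ v

/-- `P` is a periodic point of `φ`. -/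
def IsPeriodicPoint (φ : P1Map K d) (P : P1 K) : Prop :=
  ∃ n, 0 < n ∧ φ.toFun^[n] P = P

/-- `P` is a preperiodic point of `φ`. -/
def IsPreperiodicPoint (φ : P1Map K d) (P : P1 K) : Prop :=
  ∃ m, IsPeriodicPoint φ (φ.toFun^[m] P)

/-- `P` is a tail point of `φ`: preperiodic but not periodic. -/
def IsTailPoint (φ : P1Map K d) (P : P1 K) : Prop :=
  IsPreperiodicPoint φ P ∧ ¬ IsPeriodicPoint φ P

/-- The set `Tail(φ,K,P)` of `K`-rational tail points of `P`: non-periodic points having `P`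
in their forward orbit. -/
def TailOf (φ : P1Map K d) (P : P1 K) : Set (P1 K) :=
  {Q | ¬ IsPeriodicPoint φ Q ∧ ∃ n, φ.toFun^[n] Q = P}

/-- `P = [a:b]` is a critical point of `φ = [F:G]`: the algebraic condition
`φ([x:y]) = φ([a:b])`, i.e. the form `G(a,b)·F(X,Y) - F(a,b)·G(X,Y)`, vanishes to order
at least `2` at `[a:b]`. -/
def IsCriticalPt (φ : P1Map K d) (P : P1 K) : Prop :=
  ∃ (a b : K) (hab : ![a, b] ≠ 0), P = Projectivization.mk K ![a, b] hab ∧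
    (C b * X 0 - C a * X 1) ^ 2 ∣
      (C (eval ![a, b] φ.G) * φ.F - C (eval ![a, b] φ.F) * φ.G)

/-- `P` belongs to a critical cycle of `φ`: it lies in the orbit of a critical periodic
point. -/
def InCriticalCycle (φ : P1Map K d) (P : P1 K) : Prop :=
  ∃ Q, IsCriticalPt φ Q ∧ IsPeriodicPoint φ Q ∧ ∃ n, φ.toFun^[n] Q = P

/-- The cardinality `|S|` of the set of places `S` consisting of all archimedean places
together with the finite places in `T`. -/
def sCard (K : Type*) [Field K] [NumberField K] (T : Finset (HeightOneSpectrum (𝓞 K))) : ℕ :=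
  T.card + Fintype.card (InfinitePlace K)

/-- `B(s) = 2^{16 s}`. -/
def Bconst (s : ℕ) : ℕ := 2 ^ (16 * s)

/-- `C(n,s) = e^{(6n)^{3n} (n s + 1 - n)}`. -/
def Cconst (n s : ℕ) : ℝ := Real.exp ((6 * n : ℝ) ^ (3 * n) * (n * s + 1 - n))

/-- `CV(d,s) = (3B(s)+13)d + 27B(s) + C(5,s) + 6C(3,s) + 32`. -/
def CVconst (d s : ℕ) : ℝ :=
  (3 * (Bconst s : ℝ) + 13) * d + 27 * (Bconst s : ℝ) + Cconst 5 s + 6 * Cconst 3 s + 32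

/-- `L₁(d,s) = (d-1)(1 + d(1 + B(s)))`. -/
def L1const (d s : ℕ) : ℕ := (d - 1) * (1 + d * (1 + Bconst s))

/-- `L₂(d,s) = max{(2(C(3,s)+2)+1)d + 1, (d-1)(1 + B(s)(B(s) + C(3,s) + 3))}`. -/
def L2const (d s : ℕ) : ℝ :=
  max ((2 * (Cconst 3 s + 2) + 1) * d + 1)
    (((d : ℝ) - 1) * (1 + (Bconst s : ℝ) * ((Bconst s : ℝ) + Cconst 3 s + 3)))

/-- `L₃(d,s) = ((1 + 3B(s))B(s) + 1)(d-1)`. -/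
def L3const (d s : ℕ) : ℕ := ((1 + 3 * Bconst s) * Bconst s + 1) * (d - 1)

/-- `L₄(d,s) = (C(3,s) + 3)(d-1)`. -/
def L4const (d s : ℕ) : ℝ := (Cconst 3 s + 3) * ((d : ℝ) - 1)

end

set_option linter.unusedSectionVars false



namespace Polynomial
namespace EV

noncomputable def anti {K : Type*} [Field K] (f : K[X]) : K[X] :=
  f.sum fun n c => C (c / (n + 1)) * X ^ (n + 1)

theorem derivative_anti {K : Type*} [Field K] [CharZero K] (f : K[X]) :
    derivative (anti f) = f := by
  unfold anti
  rw [Polynomial.sum_def, derivative_sum]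
  conv_rhs => rw [f.as_sum_support_C_mul_X_pow]
  refine Finset.sum_congr rfl fun n _ => ?_
  rw [derivative_C_mul_X_pow]
  have h : ((n : K) + 1) ≠ 0 := by exact_mod_cast Nat.succ_ne_zero n
  congr 2
  push_cast
  field_simp

noncomputable def PInt {K : Type*} [Field K] (a b : K) (f : K[X]) : K :=
  (anti f).eval b - (anti f).eval a

variable {K : Type*} [Field K] [CharZero K]

theorem PInt_of_deriv (a b : K) (f g : K[X]) (h : derivative g = f) :
    PInt a b f = g.eval b - g.eval a := by
  have h1 : derivative (anti f - g) = 0 := by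
    rw [derivative_sub, derivative_anti, h, sub_self]
  obtain ⟨c, hc⟩ := Polynomial.natDegree_eq_zero.mp
    (derivative_eq_zero.mp h1)
  have h2 : anti f = g + C c := by rw [hc]; ring
  simp [PInt, h2]

theorem PInt_chain (a b c : K) (f : K[X]) :
    PInt a b f + PInt b c f + PInt c a f = 0 := by
  unfold PInt; ring

theorem PInt_add (a b : K) (f g : K[X]) : PInt a b (f + g) = PInt a b f + PInt a b g := by
  rw [PInt_of_deriv a b (f + g) (anti f + anti g) (by simp [derivative_anti])]
  simp [PInt]; ring

theorem PInt_C_mul (a b c : K) (f : K[X]) : PInt a b (C c * f) = c * PInt a b f := by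
  rw [PInt_of_deriv a b (C c * f) (C c * anti f) (by simp [derivative_anti])]
  simp [PInt]; ring

theorem PInt_sum {ι : Type*} (a b : K) (s : Finset ι) (f : ι → K[X]) :
    PInt a b (∑ i ∈ s, f i) = ∑ i ∈ s, PInt a b (f i) := by
  classical
  induction s using Finset.induction_on with
  | empty => simpa using PInt_of_deriv a b (0 : K[X]) 0 (by simp)
  | insert i s hi ih => rw [Finset.sum_insert hi, Finset.sum_insert hi, PInt_add, ih]

theorem PInt_affine (a b : K) (f : K[X]) :
    PInt a b f = (b - a) * PInt 0 1 (f.comp (C a + C (b - a) * X)) := by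
  rw [← PInt_C_mul]
  rw [PInt_of_deriv 0 1 _ ((anti f).comp (C a + C (b - a) * X))]
  · simp [PInt]
  · rw [derivative_comp, derivative_anti]; simp

theorem PInt_beta (q p : ℕ) :
    PInt (0 : K) 1 (X ^ p * (1 - X) ^ q) * ((p + q + 1).factorial : K)
      = (p.factorial : K) * q.factorial := by
  induction q generalizing p with
  | zero =>
    rw [PInt_of_deriv 0 1 _ (C (1 / ((p : K) + 1)) * X ^ (p + 1))]
    · have h : ((p : K) + 1) ≠ 0 := by exact_mod_cast Nat.succ_ne_zero p
      simp [Nat.factorial_succ]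
      field_simp
    · rw [derivative_C_mul_X_pow]
      have h : ((p : K) + 1) ≠ 0 := by exact_mod_cast Nat.succ_ne_zero p
      simp [h]
  | succ q ih =>
    have h1 : PInt (0 : K) 1 (C ((p : K) + 1) * (X ^ p * (1 - X) ^ (q + 1))
        + C (-((q : K) + 1)) * (X ^ (p + 1) * (1 - X) ^ q)) = 0 := by
      rw [PInt_of_deriv 0 1 _ (X ^ (p + 1) * (1 - X) ^ (q + 1))]
      · simp
      · simp [derivative_pow]
        ring
    rw [PInt_add, PInt_C_mul, PInt_C_mul] at h1
    have h2 := ih (p + 1)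
    have hp : ((p : K) + 1) ≠ 0 := by exact_mod_cast Nat.succ_ne_zero p
    have e1 : p + (q + 1) + 1 = p + 1 + q + 1 := by ring
    rw [e1]
    apply mul_left_cancel₀ hp
    rw [Nat.factorial_succ p] at h2
    rw [Nat.factorial_succ q]
    push_cast at h2 ⊢
    linear_combination ((p + 1 + q + 1).factorial : K) * h1 + ((q : K) + 1) * h2

/-- the cubic -/
noncomputable def cub (a b c : K) : K[X] := (X - C a) * (X - C b) * (X - C c)

noncomputable def padeW {R : Type*} [CommRing R] (N : ℕ) (s t : R) : R :=
  ∑ k ∈ Finset.range (N + 1),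
    (((N + k).choose N * (2 * N - k).choose N : ℕ) : R) * (s ^ (N - k) * t ^ k)

theorem pade_eval (a b c : K) (N : ℕ) :
    ((3 * N + 1).factorial : K) * PInt a b (cub a b c ^ N)
      = (-1) ^ N * ((N.factorial : K) ^ 3) * ((b - a) ^ (2 * N + 1) * padeW N (a - c) (b - c)) := by
  have h1 : (cub a b c ^ N).comp (C a + C (b - a) * X)
      = ∑ k ∈ Finset.range (N + 1), C ((-1) ^ N * (b - a) ^ (2 * N) * (N.choose k : K) *
          ((a - c) ^ (N - k) * (b - c) ^ k)) * (X ^ (N + k) * (1 - X) ^ (2 * N - k)) := by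
    have e : (cub a b c).comp (C a + C (b - a) * X)
        = C (-1 * (b - a) ^ 2) * (X * (1 - X)) * (C (b - c) * X + C (a - c) * (1 - X)) := by
      simp only [cub, mul_comp, sub_comp, X_comp, C_comp, C_sub, C_mul, C_pow, C_neg, C_1]
      ring
    rw [pow_comp, e, mul_pow, add_pow, Finset.mul_sum]
    refine Finset.sum_congr rfl fun k hk => ?_
    have hk' : k ≤ N := Nat.lt_succ_iff.mp (Finset.mem_range.mp hk)
    obtain ⟨m, rfl⟩ := Nat.exists_eq_add_of_le hk'
    rw [show 2 * (k + m) - k = k + 2 * m by omega, show k + m - k = m by omega]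
    simp only [C_mul, C_pow, C_neg, C_1, mul_pow]
    rw [show (C (((k + m).choose k : ℕ) : K)) = (((k + m).choose k : ℕ) : K[X]) by simp]
    ring
  rw [PInt_affine, h1, PInt_sum]
  simp only [PInt_C_mul]
  unfold padeW
  rw [Finset.mul_sum, Finset.mul_sum, Finset.mul_sum, Finset.mul_sum]
  refine Finset.sum_congr rfl fun k hk => ?_
  have hk' : k ≤ N := Nat.lt_succ_iff.mp (Finset.mem_range.mp hk)
  have hb := PInt_beta (K := K) (2 * N - k) (N + k)
  rw [show N + k + (2 * N - k) + 1 = 3 * N + 1 by omega] at hb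
  have c1 : ((N.factorial : K) ^ 3) * (((N + k).choose N * (2 * N - k).choose N : ℕ) : K)
      = (N.choose k : K) * ((N + k).factorial * (2 * N - k).factorial) := by
    obtain ⟨m, rfl⟩ := Nat.exists_eq_add_of_le hk'
    rw [show 2 * (k + m) - k = (k + m) + m by omega]
    have f1 := Nat.add_choose_mul_factorial_mul_factorial (k + m) k
    have f2 := Nat.add_choose_mul_factorial_mul_factorial (k + m) m
    have f3 := Nat.add_choose_mul_factorial_mul_factorial k m
    rw [Nat.choose_symm_add.symm] at f1 f2 f3
    rw [← f1, ← f2]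
    have f3' : ((((k + m).choose k) * k.factorial * m.factorial : ℕ) : K) = (k + m).factorial := by
      exact_mod_cast f3
    push_cast at f3' ⊢
    generalize (((k + m + k).choose (k + m) : ℕ) : K) = A
    generalize (((k + m + m).choose (k + m) : ℕ) : K) = B
    rw [← f3']
    ring
  push_cast at c1 ⊢
  linear_combination (b - a) * (-1) ^ N * (b - a) ^ (2 * N) * (N.choose k : K) *
          ((a - c) ^ (N - k) * (b - c) ^ k) * hb - (b - a) * (-1) ^ N * (b - a) ^ (2 * N) *
          ((a - c) ^ (N - k) * (b - c) ^ k) * c1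

end EV
end Polynomial


namespace Polynomial
namespace EV
variable {K : Type*} [Field K] [CharZero K]

theorem cub_eval (z t : K) : (cub 0 z 1).eval t = t * (t - z) * (t - 1) := by
  simp [cub]

theorem rec_identity (z : K) (n : ℕ) : ∃ (P : K[X]) (α β : K),
    (β = (n : K) * (n + 1) / (3 * ((3 * n + 4) * (3 * n + 2))) * (z * (1 - z)) ^ 2) ∧
    cub 0 z 1 ^ 2 - C α * cub 0 z 1 - C β =
      C (n : K) * derivative (cub 0 z 1) * P + cub 0 z 1 * derivative P := by
  have h4 : (3 * (n : K) + 4) ≠ 0 := by exact_mod_cast (by omega : 3 * n + 4 ≠ 0)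
  have h2 : (3 * (n : K) + 2) ≠ 0 := by exact_mod_cast (by omega : 3 * n + 2 ≠ 0)
  obtain ⟨Q, hQ⟩ : ∃ Q : K, Q = (3 * n + 4) * (3 * n + 2) := ⟨_, rfl⟩
  obtain ⟨p, hp⟩ : ∃ p : K, p = -(z ^ 2 - z + 1) / 3 := ⟨_, rfl⟩
  obtain ⟨m, hm⟩ : ∃ m : K, m = (z + 1) / 3 := ⟨_, rfl⟩
  obtain ⟨q, hq⟩ : ∃ q : K, q = m * (m - z) * (m - 1) := ⟨_, rfl⟩
  have hQ0 : Q ≠ 0 := by rw [hQ]; exact mul_ne_zero h4 h2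
  have hD : cub 0 z 1 = (X - C m) ^ 3 + C p * (X - C m) + C q := by
    refine Polynomial.funext fun t => ?_
    simp [cub_eval]
    rw [hq, hp, hm]; field_simp; ring
  have hdisc : 4 * p ^ 3 + 27 * q ^ 2 = - (z * (1 - z)) ^ 2 := by
    rw [hq, hp, hm]; field_simp; ring
  refine ⟨C (1 / (3 * (n : K) + 4)) * (X - C m) ^ 4 + C ((5 * n + 4) / Q * p) * (X - C m) ^ 2
    + C (- 1 / Q * q) * (X - C m) + C (4 * (n + 1) / (3 * Q) * p ^ 2),
    (2 - (9 * n + 7) / Q) * q, _, rfl, ?_⟩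
  rw [← hQ, ← neg_neg ((z * (1 - z)) ^ 2), ← hdisc, hD]
  refine Polynomial.funext fun t => ?_
  simp only [derivative_add, derivative_mul, derivative_C, derivative_X_sub_C_pow, derivative_X,
    derivative_sub, eval_add, eval_sub, eval_mul, eval_pow, eval_C, eval_X, eval_natCast, eval_zero,
    eval_one]
  generalize t - m = τ
  generalize (n : K) = ν at *
  norm_num
  subst hQ
  have hQ0' : (3 * ν + 4) * (3 * ν + 2) ≠ 0 := mul_ne_zero h4 h2
  generalize hu : 3 * ν + 4 = u at *
  generalize hw : 3 * ν + 2 = w at *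
  field_simp
  obtain rfl : u = w + 2 := by rw [← hu, ← hw]; ring
  subst hw
  ring

/-- the vector `(z, 1-z, -1)` -/
noncomputable def xv (z : K) : Fin 3 → K := ![z, 1 - z, -1]

noncomputable def padeV (N : ℕ) (z : K) (i : Fin 3) : K :=
  xv z i ^ (2 * N + 1) * padeW N (xv z (i + 2)) (- xv z (i + 1))

noncomputable def JI (N : ℕ) (z : K) (i : Fin 3) : K :=
  PInt ((![0, z, 1] : Fin 3 → K) i) ((![z, 1, 0] : Fin 3 → K) i) (cub 0 z 1 ^ N)

theorem JI_padeV (N : ℕ) (z : K) (i : Fin 3) :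
    ((3 * N + 1).factorial : K) * JI N z i
      = (-1) ^ N * ((N.factorial : K) ^ 3) * padeV N z i := by
  have e1 : cub 0 z 1 = cub z 1 0 := by unfold cub; ring
  have e2 : cub 0 z 1 = cub 1 0 z := by unfold cub; ring
  fin_cases i
  · have := pade_eval 0 z 1 N
    simpa [JI, padeV, xv] using this
  · have := pade_eval z 1 0 N
    rw [← e1] at this
    simpa [JI, padeV, xv] using this
  · have := pade_eval 1 0 z N
    rw [← e2] at this
    simpa [JI, padeV, xv] using this

theorem JI_sum (N : ℕ) (z : K) : JI N z 0 + JI N z 1 + JI N z 2 = 0 := by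
  simpa [JI] using PInt_chain 0 z 1 (cub 0 z 1 ^ N)

theorem padeV_sum (N : ℕ) (z : K) : padeV N z 0 + padeV N z 1 + padeV N z 2 = 0 := by
  have h0 := JI_padeV N z 0
  have h1 := JI_padeV N z 1
  have h2 := JI_padeV N z 2
  have hs := JI_sum N z
  have hn : ((-1) ^ N * ((N.factorial : K) ^ 3)) ≠ 0 := by
    refine mul_ne_zero (pow_ne_zero _ (by norm_num)) (pow_ne_zero _ ?_)
    exact_mod_cast Nat.factorial_ne_zero N
  apply mul_left_cancel₀ hn
  linear_combination - h0 - h1 - h2 + ((3 * N + 1).factorial : K) * hs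

theorem JI_rec (z : K) (n : ℕ) : ∃ α β : K,
    (β = ((n : K) + 1) * (n + 2) / (3 * ((3 * n + 7) * (3 * n + 5))) * (z * (1 - z)) ^ 2) ∧
    ∀ i, JI (n + 2) z i = α * JI (n + 1) z i + β * JI n z i := by
  obtain ⟨P, α, β, hβ, h⟩ := rec_identity z (n + 1)
  refine ⟨α, β, ?_, fun i => ?_⟩
  · rw [hβ]; push_cast; ring_nf
  have hd : derivative (cub 0 z 1 ^ (n + 1) * P) =
      cub 0 z 1 ^ (n + 2) + C (-α) * cub 0 z 1 ^ (n + 1) + C (-β) * cub 0 z 1 ^ n := by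
    have : cub 0 z 1 ^ (n + 2) + C (-α) * cub 0 z 1 ^ (n + 1) + C (-β) * cub 0 z 1 ^ n
      = cub 0 z 1 ^ n * (cub 0 z 1 ^ 2 - C α * cub 0 z 1 - C β) := by
      rw [C_neg, C_neg]; ring
    rw [this, h, derivative_mul, derivative_pow]
    push_cast
    ring
  have key : ∀ a b : K, (cub 0 z 1).eval a = 0 → (cub 0 z 1).eval b = 0 →
      PInt a b (cub 0 z 1 ^ (n + 2)) = α * PInt a b (cub 0 z 1 ^ (n + 1))
        + β * PInt a b (cub 0 z 1 ^ n) := by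
    intro a b ha hb
    have := PInt_of_deriv a b _ _ hd
    rw [PInt_add, PInt_add, PInt_C_mul, PInt_C_mul, eval_mul, eval_mul, eval_pow, eval_pow,
      ha, hb] at this
    simp only [ne_eq, Nat.add_eq_zero_iff, one_ne_zero, and_false, not_false_eq_true, zero_pow,
      zero_mul, sub_zero] at this
    linear_combination this
  apply key <;> fin_cases i <;> simp [cub_eval]

theorem JI_det (z : K) (h0 : z ≠ 0) (h1 : z ≠ 1) (h2 : z ^ 2 - z + 1 ≠ 0) (n : ℕ) :
    JI (n + 1) z 0 * JI n z 1 - JI (n + 1) z 1 * JI n z 0 ≠ 0 := by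
  have h1' : (1 - z) ≠ 0 := sub_ne_zero.mpr (Ne.symm h1)
  induction n with
  | zero =>
    have a0 := JI_padeV 0 z 0
    have a1 := JI_padeV 0 z 1
    have b0 := JI_padeV 1 z 0
    have b1 := JI_padeV 1 z 1
    simp [padeV, xv, padeW, Finset.sum_range_succ, Nat.factorial] at a0 a1 b0 b1
    have : 24 ^ 2 * (JI (0 + 1) z 0 * JI 0 z 1 - JI (0 + 1) z 1 * JI 0 z 0)
        = 24 ^ 2 * ((z * (1 - z) / 12) * (z ^ 2 - z + 1)) := by
      rw [a0, a1]
      simp only [zero_add]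
      linear_combination 24 * (1 - z) * b0 - 24 * z * b1
    rw [mul_left_cancel₀ (by norm_num) this]
    exact mul_ne_zero (div_ne_zero (mul_ne_zero h0 h1') (by norm_num)) h2
  | succ n ih =>
    obtain ⟨α, β, hβ, h⟩ := JI_rec z n
    have hβ0 : β ≠ 0 := by
      rw [hβ]
      have e1 : ((n : K) + 1) ≠ 0 := by exact_mod_cast (by omega : n + 1 ≠ 0)
      have e2 : ((n : K) + 2) ≠ 0 := by exact_mod_cast (by omega : n + 2 ≠ 0)
      have e3 : (3 * (n : K) + 7) ≠ 0 := by exact_mod_cast (by omega : 3 * n + 7 ≠ 0)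
      have e4 : (3 * (n : K) + 5) ≠ 0 := by exact_mod_cast (by omega : 3 * n + 5 ≠ 0)
      have e5 : (3 : K) ≠ 0 := by norm_num
      have e6 := mul_ne_zero h0 h1'
      exact mul_ne_zero (div_ne_zero (mul_ne_zero e1 e2) (mul_ne_zero e5 (mul_ne_zero e3 e4))) (pow_ne_zero 2 e6)
    rw [h 0, h 1]
    intro hc
    apply mul_ne_zero hβ0 ih
    linear_combination -hc

theorem padeV_det (z : K) (h0 : z ≠ 0) (h1 : z ≠ 1) (h2 : z ^ 2 - z + 1 ≠ 0) (n : ℕ) :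
    padeV (n + 1) z 0 * padeV n z 1 - padeV (n + 1) z 1 * padeV n z 0 ≠ 0 := by
  intro hc
  apply JI_det z h0 h1 h2 n
  have a0 := JI_padeV n z 0
  have a1 := JI_padeV n z 1
  have b0 := JI_padeV (n + 1) z 0
  have b1 := JI_padeV (n + 1) z 1
  have f1 : ((3 * n + 1).factorial : K) ≠ 0 := by exact_mod_cast Nat.factorial_ne_zero _
  have f2 : ((3 * (n + 1) + 1).factorial : K) ≠ 0 := by exact_mod_cast Nat.factorial_ne_zero _
  apply mul_left_cancel₀ (mul_ne_zero f1 f2)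
  rw [mul_zero]
  calc _ = (((3 * (n + 1) + 1).factorial : K) * JI (n + 1) z 0) * (((3 * n + 1).factorial : K) * JI n z 1)
      - (((3 * (n + 1) + 1).factorial : K) * JI (n + 1) z 1) * (((3 * n + 1).factorial : K) * JI n z 0) := by ring
    _ = 0 := by
      rw [a0, a1, b0, b1]
      linear_combination ((-1) ^ (n + 1) * (((n + 1).factorial : K) ^ 3)) * ((-1) ^ n * ((n.factorial : K) ^ 3)) * hc
end EV
end Polynomial


namespace EV
open Polynomial.EV

structure PlaceSys (K : Type*) [Field K] (ι : Type*) [Fintype ι] where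
  av : ι → AbsoluteValue K ℝ
  e : ι → ℕ
  S : Finset ι
  arch : Finset ι
  O : Subring K
  arch_sub : arch ⊆ S
  arch_ne : arch.Nonempty
  e_arch : ∀ v ∈ arch, e v = 1 ∨ e v = 2
  e_fin : ∀ v ∉ arch, e v = 1
  emb : ∀ v ∈ arch, ∃ σ : K →+* ℂ, ∀ x, av v x = ‖σ x‖
  ultra : ∀ v ∉ arch, ∀ x y, av v (x + y) ≤ max (av v x) (av v y)
  disc : ∀ v ∉ arch, ∀ x, av v x < 1 → av v x ≤ 1 / 2
  prod_le : ∀ x ∈ O, x ≠ 0 → 1 ≤ ∏ v, av v x ^ e v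

/-- argmin -/
noncomputable def amin (f : Fin 3 → ℝ) : Fin 3 :=
  (Finset.exists_min_image Finset.univ f ⟨0, Finset.mem_univ _⟩).choose

theorem amin_le (f : Fin 3 → ℝ) (i : Fin 3) : f (amin f) ≤ f i :=
  (Finset.exists_min_image Finset.univ f ⟨0, Finset.mem_univ _⟩).choose_spec.2 i (Finset.mem_univ _)

/-- max -/
noncomputable def amax (f : Fin 3 → ℝ) : ℝ := Finset.univ.sup' ⟨0, Finset.mem_univ _⟩ f

theorem le_amax (f : Fin 3 → ℝ) (i : Fin 3) : f i ≤ amax f := Finset.le_sup' f (Finset.mem_univ i)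

theorem exists_amax (f : Fin 3 → ℝ) : ∃ i, f i = amax f := by
  obtain ⟨i, _, hi⟩ := Finset.exists_mem_eq_sup' (s := Finset.univ) ⟨0, Finset.mem_univ _⟩ f
  exact ⟨i, hi.symm⟩

namespace PlaceSys
variable {K : Type*} [Field K] [CharZero K] {ι : Type*} [Fintype ι] (P : PlaceSys K ι)

noncomputable def B (v : ι) : ℝ := if v ∈ P.arch then 2 else 1

theorem one_le_B (v : ι) : 1 ≤ P.B v := by unfold B; split_ifs <;> norm_num

theorem B_pos (v : ι) : 0 < P.B v := lt_of_lt_of_le one_pos (P.one_le_B v)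

theorem e_pos (v : ι) : 1 ≤ P.e v := by
  by_cases h : v ∈ P.arch
  · rcases P.e_arch v h with h | h <;> omega
  · rw [P.e_fin v h]

theorem av_add (v : ι) (x y : K) : P.av v (x + y) ≤ P.B v * max (P.av v x) (P.av v y) := by
  unfold B
  split_ifs with h
  · have := (P.av v).add_le x y
    have h1 := le_max_left (P.av v x) (P.av v y)
    have h2 := le_max_right (P.av v x) (P.av v y)
    linarith
  · rw [one_mul]; exact P.ultra v h x y

theorem av_sub (v : ι) (x y : K) : P.av v (x - y) ≤ P.B v * max (P.av v x) (P.av v y) := by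
  rw [sub_eq_add_neg]
  have := P.av_add v x (-y)
  rwa [(P.av v).map_neg] at this

theorem av_nat (v : ι) (n : ℕ) : P.av v (n : K) ≤ n := by
  induction n with
  | zero => simp
  | succ n ih =>
    push_cast
    refine ((P.av v).add_le _ _).trans ?_
    rw [(P.av v).map_one]; linarith

theorem av_nat_fin (v : ι) (hv : v ∉ P.arch) (n : ℕ) : P.av v (n : K) ≤ 1 := by
  induction n with
  | zero => simp
  | succ n ih =>
    push_cast
    refine (P.ultra v hv _ _).trans ?_
    rw [(P.av v).map_one]; exact max_le ih le_rfl

theorem ultra_sum (v : ι) (hv : v ∉ P.arch) {κ : Type*} (s : Finset κ) (f : κ → K) (c : ℝ) (hc : 0 ≤ c)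
    (h : ∀ i ∈ s, P.av v (f i) ≤ c) : P.av v (∑ i ∈ s, f i) ≤ c := by
  induction s using Finset.induction_on with
  | empty => simpa using hc
  | insert i s hi ih =>
    rw [Finset.sum_insert hi]
    refine (P.ultra v hv _ _).trans (max_le (h i (Finset.mem_insert_self _ _)) (ih ?_))
    intro j hj; exact h j (Finset.mem_insert_of_mem hj)

theorem choose_bound (N k : ℕ) (hk : k ≤ N) : (N + k).choose N * (2 * N - k).choose N ≤ 8 ^ N := by
  calc _ ≤ 2 ^ (N + k) * 2 ^ (2 * N - k) :=
        Nat.mul_le_mul (Nat.choose_le_two_pow _ _) (Nat.choose_le_two_pow _ _)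
    _ = 8 ^ N := by
        rw [← pow_add, show N + k + (2 * N - k) = 3 * N by omega, pow_mul]; norm_num

theorem av_padeW (v : ι) (N : ℕ) (s t : K) (m : ℝ) (hs : P.av v s ≤ m) (ht : P.av v t ≤ m) :
    P.av v (padeW N s t) ≤ P.B v ^ (4 * N) * m ^ N := by
  have hm : 0 ≤ m := ((P.av v).nonneg s).trans hs
  have key : ∀ k ∈ Finset.range (N + 1), P.av v (s ^ (N - k) * t ^ k) ≤ m ^ N := by
    intro k hk
    have hk' : k ≤ N := Nat.lt_succ_iff.mp (Finset.mem_range.mp hk)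
    rw [(P.av v).map_mul, (P.av v).map_pow, (P.av v).map_pow]
    calc _ ≤ m ^ (N - k) * m ^ k := by
          gcongr
      _ = m ^ N := by rw [← pow_add, Nat.sub_add_cancel hk']
  unfold padeW
  by_cases h : v ∈ P.arch
  · have hB : P.B v = 2 := by simp [B, h]
    rw [hB]
    refine ((P.av v).sum_le _ _).trans ?_
    calc _ ≤ ∑ k ∈ Finset.range (N + 1), (8 : ℝ) ^ N * m ^ N := by
          refine Finset.sum_le_sum fun k hk => ?_
          have hk' : k ≤ N := Nat.lt_succ_iff.mp (Finset.mem_range.mp hk)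
          rw [(P.av v).map_mul]
          refine mul_le_mul ?_ (key k hk) ((P.av v).nonneg _) (by positivity)
          refine (P.av_nat v _).trans ?_
          exact_mod_cast choose_bound N k hk'
      _ = ((N + 1 : ℕ) : ℝ) * 8 ^ N * m ^ N := by
          rw [Finset.sum_const, Finset.card_range, nsmul_eq_mul]; ring
      _ ≤ 2 ^ N * 8 ^ N * m ^ N := by
          gcongr
          exact_mod_cast Nat.lt_two_pow_self
      _ = _ := by rw [← mul_pow, pow_mul]; norm_num
  · have hB : P.B v = 1 := by simp [B, h]
    rw [hB, one_pow, one_mul]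
    refine P.ultra_sum v h _ _ _ (by positivity) fun k hk => ?_
    rw [(P.av v).map_mul]
    calc _ ≤ 1 * m ^ N := mul_le_mul (P.av_nat_fin v h _) (key k hk) ((P.av v).nonneg _) zero_le_one
      _ = _ := one_mul _

/-- set of z that are units -/
structure Un (z : K) : Prop where
  ne0 : z ≠ 0
  ne1 : z ≠ 1
  m0 : z ∈ P.O
  i0 : z⁻¹ ∈ P.O
  i1 : (1 - z)⁻¹ ∈ P.O

variable {P}
theorem Un.xv_ne {z : K} (h : P.Un z) (i : Fin 3) : xv z i ≠ 0 := by
  fin_cases i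
  · exact h.ne0
  · simpa [xv] using sub_ne_zero.mpr (Ne.symm h.ne1)
  · simp [xv]

theorem Un.xv_mem {z : K} (h : P.Un z) (i : Fin 3) : xv z i ∈ P.O := by
  fin_cases i
  · exact h.m0
  · exact P.O.sub_mem P.O.one_mem h.m0
  · exact P.O.neg_mem P.O.one_mem

theorem Un.xv_inv_mem {z : K} (h : P.Un z) (i : Fin 3) : (xv z i)⁻¹ ∈ P.O := by
  fin_cases i
  · exact h.i0
  · exact h.i1
  · simp [xv]

theorem Un.prod_eq {z : K} (h : P.Un z) (i : Fin 3) : ∏ v, P.av v (xv z i) ^ P.e v = 1 := by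
  refine le_antisymm ?_ (P.prod_le _ (h.xv_mem i) (h.xv_ne i))
  have h1 := P.prod_le _ (h.xv_inv_mem i) (inv_ne_zero (h.xv_ne i))
  have h2 : ∏ v, P.av v (xv z i)⁻¹ ^ P.e v = (∏ v, P.av v (xv z i) ^ P.e v)⁻¹ := by
    rw [← Finset.prod_inv_distrib]
    refine Finset.prod_congr rfl fun v _ => ?_
    rw [map_inv₀, inv_pow]
  rw [h2] at h1
  have h0 : 0 < ∏ v, P.av v (xv z i) ^ P.e v :=
    Finset.prod_pos fun v _ => pow_pos ((P.av v).pos (h.xv_ne i)) _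
  exact (one_le_inv₀ h0).mp h1

variable (P)
/-- log norm -/
noncomputable def lg (v : ι) (x : K) : ℝ := P.e v * Real.log (P.av v x)

theorem sum_lg_nonneg (x : K) (hx : x ∈ P.O) (h0 : x ≠ 0) : 0 ≤ ∑ v, P.lg v x := by
  have h := Real.log_nonneg (P.prod_le x hx h0)
  rw [Real.log_prod] at h
  · refine h.trans_eq (Finset.sum_congr rfl fun v _ => ?_)
    rw [Real.log_pow]; rfl
  · intro v _; exact pow_ne_zero _ ((P.av v).ne_zero h0)

theorem Un.sum_lg {P : PlaceSys K ι} {z : K} (h : P.Un z) (i : Fin 3) : ∑ v, P.lg v (xv z i) = 0 := by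
  have h1 := congrArg Real.log (h.prod_eq i)
  rw [Real.log_one, Real.log_prod] at h1
  · rw [← h1]; refine (Finset.sum_congr rfl fun v _ => ?_)
    rw [Real.log_pow]; rfl
  · intro v _; exact pow_ne_zero _ ((P.av v).ne_zero (h.xv_ne i))

noncomputable def sec (v : ι) (z : K) : Fin 3 := amin fun i => P.av v (xv z i)
noncomputable def mu (v : ι) (z : K) : ℝ := amax fun i => P.av v (xv z i)
noncomputable def mm (v : ι) (z : K) : ℝ := P.av v (xv z (P.sec v z))
noncomputable def mx (v : ι) (z : K) : ℝ := P.e v * Real.log (P.mu v z)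
noncomputable def mn (v : ι) (z : K) : ℝ := P.e v * Real.log (P.mm v z)
noncomputable def aa (v : ι) (z : K) : ℝ := P.mx v z - P.mn v z
noncomputable def bt (v : ι) : ℝ := P.e v * Real.log (P.B v)
noncomputable def ht (z : K) : ℝ := ∑ v, P.mx v z
noncomputable def Lc : ℝ := ∑ v, P.bt v

variable {P} {z : K}
theorem le_mu (v : ι) (z : K) (i : Fin 3) : P.av v (xv z i) ≤ P.mu v z :=
  le_amax (fun i => P.av v (xv z i)) i
theorem mm_le (v : ι) (z : K) (i : Fin 3) : P.mm v z ≤ P.av v (xv z i) :=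
  amin_le (fun i => P.av v (xv z i)) i
theorem Un.mm_pos (h : P.Un z) (v : ι) : 0 < P.mm v z := (P.av v).pos (h.xv_ne _)
theorem Un.mu_pos (h : P.Un z) (v : ι) : 0 < P.mu v z :=
  lt_of_lt_of_le (h.mm_pos v) (le_mu v z _)
theorem Un.aa_nonneg (h : P.Un z) (v : ι) : 0 ≤ P.aa v z := by
  unfold aa mx mn
  have := Real.log_le_log (h.mm_pos v) (le_mu v z (P.sec v z) : P.mm v z ≤ P.mu v z)
  have := mul_le_mul_of_nonneg_left this (Nat.cast_nonneg (P.e v) : (0 : ℝ) ≤ P.e v)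
  linarith

theorem xv_sum (z : K) (i : Fin 3) : xv z i + xv z (i + 1) + xv z (i + 2) = 0 := by
  fin_cases i <;> simp [xv] <;> ring

theorem sum_fin3 {M : Type*} [AddCommMonoid M] (f : Fin 3 → M) (i : Fin 3) :
    f 0 + f 1 + f 2 = f i + f (i + 1) + f (i + 2) := by
  fin_cases i
  · rfl
  · show f 0 + f 1 + f 2 = f 1 + f 2 + f 0
    abel
  · show f 0 + f 1 + f 2 = f 2 + f 0 + f 1
    abel

theorem mu_le_succ (v : ι) (z : K) :
    P.mu v z ≤ P.B v * P.av v (xv z (P.sec v z + 1)) ∧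
    P.mu v z ≤ P.B v * P.av v (xv z (P.sec v z + 2)) := by
  obtain ⟨i, hi⟩ := exists_amax fun i => P.av v (xv z i)
  have hB := P.one_le_B v
  set s := P.sec v z
  have h0 : ∀ j, P.av v (xv z s) ≤ P.av v (xv z j) := fun j => mm_le v z j
  have hi' : P.mu v z = P.av v (xv z i) := hi.symm
  rw [hi']
  have e1 : xv z (s + 1) = -(xv z s + xv z (s + 2)) := by linear_combination xv_sum z s
  have e2 : xv z (s + 2) = -(xv z s + xv z (s + 1)) := by linear_combination xv_sum z s
  have n1 : P.av v (xv z (s + 1)) ≤ P.B v * P.av v (xv z (s + 2)) := by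
    conv_lhs => rw [e1, (P.av v).map_neg]
    refine (P.av_add v _ _).trans ?_
    rw [max_eq_right (h0 _)]
  have n2 : P.av v (xv z (s + 2)) ≤ P.B v * P.av v (xv z (s + 1)) := by
    conv_lhs => rw [e2, (P.av v).map_neg]
    refine (P.av_add v _ _).trans ?_
    rw [max_eq_right (h0 _)]
  have t : ∀ j, P.av v (xv z j) ≤ P.B v * P.av v (xv z j) := fun j =>
    le_mul_of_one_le_left ((P.av v).nonneg _) hB
  have hcase : i = s ∨ i = s + 1 ∨ i = s + 2 := by
    clear_value s; clear * -; revert i s; decide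
  rcases hcase with h | h | h
  · rw [h]; exact ⟨(h0 _).trans (t _), (h0 _).trans (t _)⟩
  · rw [h]; exact ⟨t _, n1⟩
  · rw [h]; exact ⟨n2, t _⟩

theorem Un.local_sum (h : P.Un z) (v : ι) :
    P.mn v z + 2 * P.mx v z - P.bt v ≤ P.lg v (xv z 0) + P.lg v (xv z 1) + P.lg v (xv z 2) ∧
    P.lg v (xv z 0) + P.lg v (xv z 1) + P.lg v (xv z 2) ≤ P.mn v z + 2 * P.mx v z := by
  have hs := sum_fin3 (fun i => P.lg v (xv z i)) (P.sec v z)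
  rw [hs]
  have he : (0 : ℝ) ≤ P.e v := Nat.cast_nonneg _
  have h0 : P.lg v (xv z (P.sec v z)) = P.mn v z := rfl
  have up : ∀ j, P.lg v (xv z j) ≤ P.mx v z := fun j =>
    mul_le_mul_of_nonneg_left (Real.log_le_log ((P.av v).pos (h.xv_ne j)) (le_mu v z j)) he
  have lo : ∀ j, P.mu v z ≤ P.B v * P.av v (xv z j) → P.mx v z - P.bt v ≤ P.lg v (xv z j) := by
    intro j hj
    have := Real.log_le_log (h.mu_pos v) hj
    rw [Real.log_mul (P.B_pos v).ne' ((P.av v).ne_zero (h.xv_ne j))] at this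
    have := mul_le_mul_of_nonneg_left this he
    unfold mx bt lg
    linarith
  obtain ⟨m1, m2⟩ := mu_le_succ (P := P) v z
  rw [h0]
  refine ⟨?_, by linarith [up (P.sec v z + 1), up (P.sec v z + 2)]⟩
  have hex : P.mx v z ≤ P.lg v (xv z (P.sec v z + 1)) ∨ P.mx v z ≤ P.lg v (xv z (P.sec v z + 2)) := by
    obtain ⟨i, hi⟩ := exists_amax fun i => P.av v (xv z i)
    have hi' : P.lg v (xv z i) = P.mx v z := by unfold lg mx mu; rw [← hi]
    have hcase : i = P.sec v z ∨ i = P.sec v z + 1 ∨ i = P.sec v z + 2 := by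
      generalize P.sec v z = s; clear * -; revert i s; decide
    rcases hcase with h1 | h1 | h1
    · left
      rw [← hi', h1]
      exact mul_le_mul_of_nonneg_left (Real.log_le_log (h.mm_pos v) (mm_le v z _)) he
    · left; rw [← h1, hi']
    · right; rw [← h1, hi']
  rcases hex with h1 | h1
  · linarith [lo _ m2]
  · linarith [lo _ m1]

theorem Un.sum_aa (h : P.Un z) : 3 * P.ht z - P.Lc ≤ ∑ v, P.aa v z ∧ ∑ v, P.aa v z ≤ 3 * P.ht z := by
  have h0 : ∑ v, (P.lg v (xv z 0) + P.lg v (xv z 1) + P.lg v (xv z 2)) = 0 := by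
    rw [Finset.sum_add_distrib, Finset.sum_add_distrib, h.sum_lg, h.sum_lg, h.sum_lg]; simp
  have l := Finset.sum_le_sum fun v (_ : v ∈ Finset.univ) => (h.local_sum v).1
  have u := Finset.sum_le_sum fun v (_ : v ∈ Finset.univ) => (h.local_sum v).2
  rw [h0] at l u
  simp only [Finset.sum_sub_distrib, Finset.sum_add_distrib, ← Finset.mul_sum] at l u
  unfold ht Lc aa
  rw [Finset.sum_sub_distrib]
  constructor <;> linarith

end PlaceSys
end EV


namespace EV
open Polynomial.EV
namespace PlaceSys
variable {K : Type*} [Field K] [CharZero K] {ι : Type*} [Fintype ι] {P : PlaceSys K ι} {z w : K}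

noncomputable def dt (N : ℕ) (w z : K) : K := xv w 0 * padeV N z 1 - xv w 1 * padeV N z 0

theorem dt_eq (N : ℕ) (w z : K) (i : Fin 3) :
    dt N w z = xv w i * padeV N z (i + 1) - xv w (i + 1) * padeV N z i := by
  have h := padeV_sum N z
  have h2 := xv_sum w 0
  simp only [zero_add] at h2
  fin_cases i
  · rfl
  · show dt N w z = xv w 1 * padeV N z 2 - xv w 2 * padeV N z 1
    unfold dt
    linear_combination padeV N z 1 * h2 - xv w 1 * h
  · show dt N w z = xv w 2 * padeV N z 0 - xv w 0 * padeV N z 2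
    unfold dt
    linear_combination  xv w 0 * h - padeV N z 0 * h2

theorem Un.padeV_mem (h : P.Un z) (N : ℕ) (i : Fin 3) : padeV N z i ∈ P.O := by
  unfold padeV padeW
  refine P.O.mul_mem (P.O.pow_mem (h.xv_mem i) _) (P.O.sum_mem fun k _ => ?_)
  exact P.O.mul_mem (natCast_mem _ _) (P.O.mul_mem (P.O.pow_mem (h.xv_mem _) _)
    (P.O.pow_mem (P.O.neg_mem (h.xv_mem _)) _))

theorem Un.dt_mem (hw : P.Un w) (hz : P.Un z) (N : ℕ) : dt N w z ∈ P.O :=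
  P.O.sub_mem (P.O.mul_mem (hw.xv_mem _) (hz.padeV_mem _ _))
    (P.O.mul_mem (hw.xv_mem _) (hz.padeV_mem _ _))

theorem Un.av_padeV (hz : P.Un z) (v : ι) (N : ℕ) (i : Fin 3) :
    P.av v (padeV N z i) ≤ P.av v (xv z i) ^ (2 * N + 1) * (P.B v ^ (4 * N) * P.mu v z ^ N) := by
  unfold padeV
  rw [(P.av v).map_mul, (P.av v).map_pow]
  refine mul_le_mul_of_nonneg_left ?_ (pow_nonneg ((P.av v).nonneg _) _)
  refine P.av_padeW v N _ _ _ (le_mu v z _) ?_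
  rw [(P.av v).map_neg]
  exact le_mu v z _

theorem Un.lg_dt (hw : P.Un w) (hz : P.Un z) (v : ι) (hs : P.sec v w = P.sec v z) (N : ℕ)
    (hd : dt N w z ≠ 0) :
    P.lg v (dt N w z) ≤ (1 + 4 * N) * P.bt v + P.mx v w + (3 * N + 1) * P.mx v z
      - min (P.aa v w) ((2 * N + 1) * P.aa v z) := by
  have he : (0 : ℝ) ≤ P.e v := Nat.cast_nonneg _
  have hB := P.B_pos v
  have hmz := hz.mm_pos v
  have hmw := hw.mm_pos v
  have hMz := hz.mu_pos v
  have hMw := hw.mu_pos v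
  set i := P.sec v z with hi
  have e1 : P.mm v z = P.av v (xv z i) := rfl
  have e2 : P.mm v w = P.av v (xv w i) := by unfold mm; rw [hs]
  have t1 : P.av v (xv w i * padeV N z (i + 1)) ≤
      P.B v ^ (4 * N) * (P.mm v w * P.mu v z ^ (3 * N + 1)) := by
    rw [(P.av v).map_mul, ← e2]
    calc _ ≤ P.mm v w * (P.mu v z ^ (2 * N + 1) * (P.B v ^ (4 * N) * P.mu v z ^ N)) := by
          refine mul_le_mul_of_nonneg_left ((hz.av_padeV v N _).trans ?_) hmw.le
          have := pow_le_pow_left₀ ((P.av v).nonneg (xv z (i + 1))) (le_mu v z (i + 1)) (2 * N + 1)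
          gcongr
      _ = _ := by ring
  have t2 : P.av v (xv w (i + 1) * padeV N z i) ≤
      P.B v ^ (4 * N) * (P.mu v w * (P.mm v z ^ (2 * N + 1) * P.mu v z ^ N)) := by
    rw [(P.av v).map_mul]
    calc _ ≤ P.mu v w * (P.mm v z ^ (2 * N + 1) * (P.B v ^ (4 * N) * P.mu v z ^ N)) := by
          refine mul_le_mul (le_mu v w _) (hz.av_padeV v N _) ((P.av v).nonneg _) hMw.le
      _ = _ := by ring
  have t3 : P.av v (dt N w z) ≤ P.B v ^ (1 + 4 * N) *
      max (P.mm v w * P.mu v z ^ (3 * N + 1)) (P.mu v w * (P.mm v z ^ (2 * N + 1) * P.mu v z ^ N)) := by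
    rw [dt_eq N w z i]
    refine (P.av_sub v _ _).trans ?_
    rw [pow_add, pow_one, mul_assoc]
    refine mul_le_mul_of_nonneg_left ?_ hB.le
    rw [mul_max_of_nonneg _ _ (by positivity)]
    exact max_le_max t1 t2
  have hd0 : 0 < P.av v (dt N w z) := (P.av v).pos hd
  have hlog := Real.log_le_log hd0 t3
  have hl1 : Real.log (P.mm v w * P.mu v z ^ (3 * N + 1))
      = Real.log (P.mm v w) + (3 * N + 1) * Real.log (P.mu v z) := by
    rw [Real.log_mul hmw.ne' (by positivity), Real.log_pow]; push_cast; ring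
  have hl2 : Real.log (P.mu v w * (P.mm v z ^ (2 * N + 1) * P.mu v z ^ N))
      = Real.log (P.mu v w) + ((2 * N + 1) * Real.log (P.mm v z) + N * Real.log (P.mu v z)) := by
    rw [Real.log_mul hMw.ne' (by positivity), Real.log_mul (by positivity) (by positivity),
      Real.log_pow, Real.log_pow]; push_cast; ring
  have hle : P.lg v (dt N w z) ≤ P.e v * ((1 + 4 * N) * Real.log (P.B v) + 
      max (Real.log (P.mm v w) + (3 * N + 1) * Real.log (P.mu v z))
       (Real.log (P.mu v w) + ((2 * N + 1) * Real.log (P.mm v z) + N * Real.log (P.mu v z)))) := by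
    unfold lg
    refine mul_le_mul_of_nonneg_left (hlog.trans ?_) he
    rw [Real.log_mul (by positivity) (by positivity), Real.log_pow, ← hl1, ← hl2]
    push_cast
    gcongr
    rcases max_cases (P.mm v w * P.mu v z ^ (3 * N + 1))
      (P.mu v w * (P.mm v z ^ (2 * N + 1) * P.mu v z ^ N)) with ⟨h, _⟩ | ⟨h, _⟩ <;> rw [h]
    · exact le_max_left _ _
    · exact le_max_right _ _
  refine hle.trans ?_
  unfold aa mx mn bt
  rcases max_cases (Real.log (P.mm v w) + (3 * N + 1) * Real.log (P.mu v z))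
       (Real.log (P.mu v w) + ((2 * N + 1) * Real.log (P.mm v z) + N * Real.log (P.mu v z))) with
       ⟨h, _⟩ | ⟨h, _⟩ <;> rw [h]
  · have := min_le_left ((P.e v : ℝ) * Real.log (P.mu v w) - P.e v * Real.log (P.mm v w))
      ((2 * N + 1) * (P.e v * Real.log (P.mu v z) - P.e v * Real.log (P.mm v z)))
    linarith
  · have := min_le_right ((P.e v : ℝ) * Real.log (P.mu v w) - P.e v * Real.log (P.mm v w))
      ((2 * N + 1) * (P.e v * Real.log (P.mu v z) - P.e v * Real.log (P.mm v z)))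
    linarith

theorem Un.ineqN (hw : P.Un w) (hz : P.Un z) (hs : ∀ v, P.sec v w = P.sec v z) (N : ℕ)
    (hd : dt N w z ≠ 0) :
    ∑ v, min (P.aa v w) ((2 * N + 1) * P.aa v z) ≤
      P.ht w + (3 * N + 1) * P.ht z + (1 + 4 * N) * P.Lc := by
  have h0 := P.sum_lg_nonneg _ (hw.dt_mem hz N) hd
  have h1 := Finset.sum_le_sum fun v (_ : v ∈ Finset.univ) => hw.lg_dt hz v (hs v) N hd
  simp only [Finset.sum_sub_distrib, Finset.sum_add_distrib, ← Finset.mul_sum] at h1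
  unfold ht Lc
  linarith

theorem dt_zero (w z : K) : dt 0 w z = w - z := by
  simp [dt, padeV, padeW, xv]; ring

theorem exc_unique (h0 : z ≠ 0) (h1 : z ≠ 1) (h2 : z ^ 2 - z + 1 ≠ 0) (N : ℕ) (w' : K)
    (hw : dt N w z = 0) (hw' : dt N w' z = 0) : w = w' := by
  have hd := padeV_det z h0 h1 h2 N
  simp only [dt, xv, Matrix.cons_val_zero, Matrix.cons_val_one] at hw hw'
  by_contra hne
  have e : (w - w') * (padeV N z 0 + padeV N z 1) = 0 := by linear_combination hw - hw'
  have e1 : padeV N z 0 + padeV N z 1 = 0 := (mul_eq_zero.mp e).resolve_left (sub_ne_zero.mpr hne)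
  have e2 : padeV N z 0 = 0 := by linear_combination w * e1 - hw
  have e3 : padeV N z 1 = 0 := by linear_combination e1 - e2
  rw [e2, e3] at hd
  simp at hd

theorem exc_consec (h0 : z ≠ 0) (h1 : z ≠ 1) (h2 : z ^ 2 - z + 1 ≠ 0) (N : ℕ)
    (hw : dt N w z = 0) (hw' : dt (N + 1) w z = 0) : False := by
  have hd := padeV_det z h0 h1 h2 N
  simp only [dt, xv, Matrix.cons_val_zero, Matrix.cons_val_one] at hw hw'
  apply hd
  linear_combination (padeV (N + 1) z 0 + padeV (N + 1) z 1) * hw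
    - (padeV N z 0 + padeV N z 1) * hw'

theorem Un.cyc (hz : P.Un z) (hpos : 0 < P.ht z) : z ^ 2 - z + 1 ≠ 0 := by
  intro h
  have e3 : z ^ 3 = -1 := by linear_combination (z + 1) * h
  have e1 : 1 - z = -(z ^ 2) := by linear_combination h
  have hv : ∀ v, P.av v z = 1 := by
    intro v
    have := congrArg (P.av v) e3
    rw [(P.av v).map_pow, (P.av v).map_neg, (P.av v).map_one] at this
    exact (pow_eq_one_iff_of_nonneg ((P.av v).nonneg _) (by norm_num)).mp this
  have : ∀ v, P.mu v z = 1 := by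
    intro v
    obtain ⟨i, hi⟩ := exists_amax fun i => P.av v (xv z i)
    unfold mu
    rw [← hi]
    fin_cases i
    · simpa [xv] using hv v
    · simp only [xv]
      show P.av v (1 - z) = 1
      rw [e1, (P.av v).map_neg, (P.av v).map_pow, hv, one_pow]
    · simp [xv]
  unfold ht mx at hpos
  simp [this] at hpos
end PlaceSys

/-- combinatorial bound in a class -/
theorem class_bound {α : Type*} [DecidableEq α] (C : Finset α) (h : α → ℝ) (L a : ℝ) (hL : 0 < L) (ha : 0 ≤ a)
    (Exc : ℕ → α → α → Prop)
    (h4 : ∀ z ∈ C, 4 * L ≤ h z) (hα : ∀ z ∈ C, a ≤ 3 * h z)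
    (H0 : ∀ z ∈ C, ∀ w ∈ C, w ≠ z → 2.94 * min (h w) (h z) ≤ h w + h z + 2 * L)
    (HN : ∀ N : ℕ, ∀ z ∈ C, ∀ w ∈ C, ¬ Exc N z w →
      2.94 * min (h w) ((2 * N + 1) * h z) ≤ h w + (3 * N + 1) * h z + (6 * N + 2) * L + 2 * N * a)
    (HE1 : ∀ N, ∀ z ∈ C, ∀ w ∈ C, ∀ w' ∈ C, Exc N z w → Exc N z w' → w = w')
    (HE2 : ∀ N, ∀ z ∈ C, ∀ w ∈ C, Exc N z w → Exc (N + 1) z w → False) :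
    C.card ≤ 11 := by
  obtain ⟨h0, hh0⟩ : ∃ h0, h0 = max (4 * L) (a / 3) := ⟨_, rfl⟩
  have b1 : 4 * L ≤ h0 := hh0 ▸ le_max_left _ _
  have b2 : a / 3 ≤ h0 := hh0 ▸ le_max_right _ _
  have b3 : ∀ z ∈ C, h0 ≤ h z := by
    intro z hz; rw [hh0]; exact max_le (h4 z hz) (by linarith [hα z hz])
  have G0 : ∀ z ∈ C, ∀ w ∈ C, w ≠ z → h z ≤ h w → 1.94 * h z ≤ h w + 2 * L := by
    intro z hz w hw hne hle
    have := H0 z hz w hw hne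
    rw [min_eq_right hle] at this
    linarith
  have I : ∀ c c' : ℝ, c' ≤ 1.94 * c - 0.5 →
      (C.filter fun z => c * h0 ≤ h z ∧ h z < c' * h0).card ≤ 1 := by
    intro c c' hc
    rw [Finset.card_le_one]
    have aux : ∀ z ∈ C, ∀ w ∈ C, c * h0 ≤ h z → h w < c' * h0 → h z ≤ h w → w ≠ z → False := by
      intro z hz w hw h1 h2 h3 hne
      have := G0 z hz w hw hne h3
      nlinarith
    intro z hz w hw
    rw [Finset.mem_filter] at hz hw
    by_contra hne
    rcases le_total (h z) (h w) with hle | hle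
    · exact aux z hz.1 w hw.1 hz.2.1 hw.2.2 hle (Ne.symm hne)
    · exact aux w hw.1 z hz.1 hw.2.1 hz.2.2 hle hne
  have J1 := I 1 1.44 (by norm_num)
  have J2 := I 1.44 2.29 (by norm_num)
  have J3 := I 2.29 3.94 (by norm_num)
  have J4 := I 3.94 7.14 (by norm_num)
  have J5 := I 7.14 13.35 (by norm_num)
  have J6 := I 13.35 25.39 (by norm_num)
  have J7 : (C.filter fun z => 25.39 * h0 ≤ h z).card ≤ 5 := by
    rcases (C.filter fun z => 25.39 * h0 ≤ h z).eq_empty_or_nonempty with he | hne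
    · rw [he]; simp
    obtain ⟨z, hz, hmin⟩ := Finset.exists_min_image _ h hne
    rw [Finset.mem_filter] at hz
    obtain ⟨hzC, hz25⟩ := hz
    have p0 : 0 < h z := by nlinarith
    have pL : 100 * L ≤ h z := by linarith
    have pa : 25 * a ≤ 3 * h z := by linarith
    have cover : (C.filter fun z => 25.39 * h0 ≤ h z) ⊆
        {z} ∪ ((C.filter fun w => w ≠ z ∧ h z ≤ h w ∧ h w ≤ 2.23 * h z) ∪
          ((C.filter fun w => Exc 1 z w) ∪ ((C.filter fun w => Exc 2 z w) ∪ (C.filter fun w => Exc 3 z w)))) := by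
      intro w hw
      have hzw := hmin w hw
      rw [Finset.mem_filter] at hw
      obtain ⟨hwC, -⟩ := hw
      simp only [Finset.mem_union, Finset.mem_singleton, Finset.mem_filter, hwC, true_and]
      by_contra hcon
      push Not at hcon
      obtain ⟨n0, n1, n2, n3, n4⟩ := hcon
      have n1' := n1 n0 hzw
      have ex : ∀ N : ℕ, ¬ Exc N z w → h w ≤ (1.702 * N + 0.527) * h z ∨ (2.58 * N + 1.92) * h z ≤ h w := by
        intro N hN
        have := HN N z hzC w hwC hN
        have hNn : (0 : ℝ) ≤ N := Nat.cast_nonneg N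
        have u1 : (N : ℝ) * (100 * L) ≤ N * h z := mul_le_mul_of_nonneg_left pL hNn
        have u2 : (N : ℝ) * (25 * a) ≤ N * (3 * h z) := mul_le_mul_of_nonneg_left pa hNn
        rcases min_cases (h w) ((2 * N + 1) * h z) with ⟨hm, hc⟩ | ⟨hm, hc⟩ <;> rw [hm] at this
        · left; nlinarith
        · right; nlinarith
      have x1 := ex 1 n2
      have x2 := ex 2 n3
      have x3 := ex 3 n4
      norm_num at x1 x2 x3
      have h9 : 9 * h z ≤ h w := by
        rcases x1 with x1 | x1
        · nlinarith
        rcases x2 with x2 | x2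
        · nlinarith
        rcases x3 with x3 | x3 <;> nlinarith
      obtain ⟨lam, hlam⟩ : ∃ lam, lam = h w / h z := ⟨_, rfl⟩
      have hw' : h w = lam * h z := by rw [hlam]; field_simp
      have l9 : 9 ≤ lam := by rw [hlam, le_div_iff₀ p0]; exact h9
      set N := ⌊(lam - 1.92) / 2.58⌋₊ + 1 with hN
      have f1 : (⌊(lam - 1.92) / 2.58⌋₊ : ℝ) ≤ (lam - 1.92) / 2.58 := Nat.floor_le (by
        apply div_nonneg <;> linarith)
      have f2 : (lam - 1.92) / 2.58 < (⌊(lam - 1.92) / 2.58⌋₊ : ℝ) + 1 := Nat.lt_floor_add_one _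
      rw [le_div_iff₀ (by norm_num)] at f1
      rw [div_lt_iff₀ (by norm_num)] at f2
      have hNc : (N : ℝ) = (⌊(lam - 1.92) / 2.58⌋₊ : ℝ) + 1 := by rw [hN]; push_cast; ring
      have g : ∀ M : ℕ, ((1.702 * M + 0.527 : ℝ)) < lam → lam < 2.58 * M + 1.92 → Exc M z w := by
        intro M k1 k2
        by_contra hM
        rcases ex M hM with x | x <;> rw [hw'] at x
        · have := le_of_mul_le_mul_right x p0; linarith
        · have := le_of_mul_le_mul_right x p0; linarith
      refine HE2 N z hzC w hwC (g N ?_ ?_) (g (N + 1) ?_ ?_)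
      · rw [hNc]; linarith
      · rw [hNc]; linarith
      · push_cast; rw [hNc]; linarith
      · push_cast; rw [hNc]; linarith
    have k1 : (C.filter fun w => w ≠ z ∧ h z ≤ h w ∧ h w ≤ 2.23 * h z).card ≤ 1 := by
      rw [Finset.card_le_one]
      have aux : ∀ x ∈ C, ∀ w ∈ C, x ≠ z → h z ≤ h x → h w ≤ 2.23 * h z → h x ≤ h w → w ≠ x → False := by
        intro x hx w hw h1 h2 h3 h5 h6
        have := G0 z hzC x hx h1 h2
        have := G0 x hx w hw h6 h5
        nlinarith
      intro x hx w hw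
      rw [Finset.mem_filter] at hx hw
      by_contra hne
      rcases le_total (h x) (h w) with hle | hle
      · exact aux x hx.1 w hw.1 hx.2.1 hx.2.2.1 hw.2.2.2 hle (Ne.symm hne)
      · exact aux w hw.1 x hx.1 hw.2.1 hw.2.2.1 hx.2.2.2 hle hne
    have kE : ∀ N, (C.filter fun w => Exc N z w).card ≤ 1 := by
      intro N
      rw [Finset.card_le_one]
      intro x hx w hw
      rw [Finset.mem_filter] at hx hw
      exact HE1 N z hzC x hx.1 w hw.1 hx.2 hw.2
    refine (Finset.card_le_card cover).trans ?_
    refine (Finset.card_union_le _ _).trans ?_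
    have u1 := Finset.card_union_le (C.filter fun w => w ≠ z ∧ h z ≤ h w ∧ h w ≤ 2.23 * h z)
          ((C.filter fun w => Exc 1 z w) ∪ ((C.filter fun w => Exc 2 z w) ∪ (C.filter fun w => Exc 3 z w)))
    have u2 := Finset.card_union_le (C.filter fun w => Exc 1 z w) 
      ((C.filter fun w => Exc 2 z w) ∪ (C.filter fun w => Exc 3 z w))
    have u3 := Finset.card_union_le (C.filter fun w => Exc 2 z w) (C.filter fun w => Exc 3 z w)
    have := kE 1
    have := kE 2
    have := kE 3
    rw [Finset.card_singleton]
    omega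
  have cov : C ⊆ (C.filter fun z => 1 * h0 ≤ h z ∧ h z < 1.44 * h0) ∪
      ((C.filter fun z => 1.44 * h0 ≤ h z ∧ h z < 2.29 * h0) ∪
      ((C.filter fun z => 2.29 * h0 ≤ h z ∧ h z < 3.94 * h0) ∪
      ((C.filter fun z => 3.94 * h0 ≤ h z ∧ h z < 7.14 * h0) ∪
      ((C.filter fun z => 7.14 * h0 ≤ h z ∧ h z < 13.35 * h0) ∪
      ((C.filter fun z => 13.35 * h0 ≤ h z ∧ h z < 25.39 * h0) ∪
       (C.filter fun z => 25.39 * h0 ≤ h z)))))) := by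
    intro z hz
    have := b3 z hz
    simp only [Finset.mem_union, Finset.mem_filter, hz, true_and]
    by_contra hcon
    simp only [not_or, not_and, not_lt, not_le] at hcon
    obtain ⟨n1, n2, n3, n4, n5, n6, n7⟩ := hcon
    linarith [n6 (n5 (n4 (n3 (n2 (n1 (by linarith))))))]
  have hcard := Finset.card_le_card cov
  refine hcard.trans ?_
  refine (Finset.card_union_le _ _).trans (le_trans (Nat.add_le_add J1
    ((Finset.card_union_le _ _).trans (Nat.add_le_add J2
    ((Finset.card_union_le _ _).trans (Nat.add_le_add J3
    ((Finset.card_union_le _ _).trans (Nat.add_le_add J4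
    ((Finset.card_union_le _ _).trans (Nat.add_le_add J5
    ((Finset.card_union_le _ _).trans (Nat.add_le_add J6 J7))))))))))) ?_)
  norm_num
end EV


namespace EV
open Polynomial.EV

theorem count_keys {α ι Λ : Type*} [Fintype ι] (Z : Finset α) (key : α → ι → Λ)
    (lab : ι → Finset Λ) (wt : ι → Λ → ℝ) (hmem : ∀ z ∈ Z, ∀ i, key z i ∈ lab i)
    (hwt : ∀ i l, 0 ≤ wt i l) (ω : ℝ) (hω : ∀ z ∈ Z, ω ≤ ∏ i, wt i (key z i)) (m : ℕ)
    (hf : ∀ z ∈ Z, (Z.filter fun w => key w = key z).card ≤ m) :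
    (Z.card : ℝ) * ω ≤ m * ∏ i, ∑ l ∈ lab i, wt i l := by
  calc (Z.card : ℝ) * ω = ∑ z ∈ Z, ω := by rw [Finset.sum_const, nsmul_eq_mul]
    _ ≤ ∑ z ∈ Z, ∏ i, wt i (key z i) := Finset.sum_le_sum hω
    _ = ∑ κ ∈ Fintype.piFinset lab, ∑ z ∈ Z.filter (fun z => key z = κ), ∏ i, wt i (key z i) := by
        rw [Finset.sum_fiberwise_of_maps_to]
        intro z hz
        rw [Fintype.mem_piFinset]
        exact hmem z hz
    _ ≤ ∑ κ ∈ Fintype.piFinset lab, (m : ℝ) * ∏ i, wt i (κ i) := by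
        refine Finset.sum_le_sum fun κ _ => ?_
        calc _ = ∑ z ∈ Z.filter (fun z => key z = κ), ∏ i, wt i (κ i) := by
              refine Finset.sum_congr rfl fun z hz => ?_
              rw [(Finset.mem_filter.mp hz).2]
          _ = ((Z.filter (fun z => key z = κ)).card : ℝ) * ∏ i, wt i (κ i) := by
              rw [Finset.sum_const, nsmul_eq_mul]
          _ ≤ _ := by
              refine mul_le_mul_of_nonneg_right ?_ (Finset.prod_nonneg fun i _ => hwt _ _)
              rcases (Z.filter (fun z => key z = κ)).eq_empty_or_nonempty with he | ⟨z, hz⟩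
              · rw [he]; simp
              · obtain ⟨h1, h2⟩ := Finset.mem_filter.mp hz
                have := hf z h1
                rw [h2] at this
                exact_mod_cast this
    _ = m * ∏ i, ∑ l ∈ lab i, wt i l := by
        rw [Finset.prod_univ_sum, Finset.mul_sum]

theorem prod_ite_card {ι : Type*} [Fintype ι] (S : Finset ι) (c : ℝ) :
    ∏ v, (if v ∈ S then c else 1) = c ^ S.card := by
  rw [Finset.prod_ite_mem, Finset.univ_inter, Finset.prod_const]

namespace PlaceSys
variable {K : Type*} [Field K] [CharZero K] {ι : Type*} [Fintype ι] (P : PlaceSys K ι) {z w : K}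

structure Fam (Z : Finset K) : Prop where
  un : ∀ z ∈ Z, P.Un z
  c0 : ∀ v ∉ P.S, ∀ z ∈ Z, ∀ w ∈ Z, P.av v z = P.av v w
  c1 : ∀ v ∉ P.S, ∀ z ∈ Z, ∀ w ∈ Z, P.av v (1 - z) = P.av v (1 - w)

noncomputable def AS (z : K) : ℝ := ∑ v ∈ P.S, P.aa v z
noncomputable def AC (z : K) : ℝ := ∑ v ∈ P.Sᶜ, P.aa v z

theorem s_pos : 0 < P.S.card := by
  obtain ⟨v, hv⟩ := P.arch_ne
  exact Finset.card_pos.mpr ⟨v, P.arch_sub hv⟩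

theorem Lc_pos : 0 < P.Lc := by
  obtain ⟨v, hv⟩ := P.arch_ne
  have hn : ∀ v, 0 ≤ P.bt v := fun v =>
    mul_nonneg (Nat.cast_nonneg _) (Real.log_nonneg (P.one_le_B v))
  refine Finset.sum_pos' (fun v _ => hn v) ⟨v, Finset.mem_univ _, ?_⟩
  have : P.B v = 2 := by simp [B, hv]
  unfold bt
  rw [this]
  exact mul_pos (by exact_mod_cast P.e_pos v) (Real.log_pos (by norm_num))

theorem AS_add_AC (z : K) : ∑ v, P.aa v z = P.AS z + P.AC z :=
  (Finset.sum_add_sum_compl _ _).symm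

variable {P} {Z : Finset K}

theorem Fam.xv_eq (hZ : P.Fam Z) {v : ι} (hv : v ∉ P.S) {z w : K} (hz : z ∈ Z) (hw : w ∈ Z) :
    (fun i => P.av v (xv z i)) = fun i => P.av v (xv w i) := by
  funext i
  fin_cases i
  · exact hZ.c0 v hv z hz w hw
  · exact hZ.c1 v hv z hz w hw
  · rfl

theorem Fam.sec_eq (hZ : P.Fam Z) {v : ι} (hv : v ∉ P.S) {z w : K} (hz : z ∈ Z) (hw : w ∈ Z) :
    P.sec v z = P.sec v w := by
  unfold sec; rw [hZ.xv_eq hv hz hw]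

theorem Fam.aa_eq (hZ : P.Fam Z) {v : ι} (hv : v ∉ P.S) {z w : K} (hz : z ∈ Z) (hw : w ∈ Z) :
    P.aa v z = P.aa v w := by
  have h := hZ.xv_eq hv hz hw
  have h1 : P.mu v z = P.mu v w := by unfold mu; rw [h]
  have h2 : P.mm v z = P.mm v w := by
    unfold mm; rw [hZ.sec_eq hv hz hw]; exact congrFun h _
  unfold aa mx mn; rw [h1, h2]

theorem Fam.AC_eq (hZ : P.Fam Z) {z w : K} (hz : z ∈ Z) (hw : w ∈ Z) : P.AC z = P.AC w :=
  Finset.sum_congr rfl fun _ hv => hZ.aa_eq (Finset.mem_compl.mp hv) hz hw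

variable (P) in
noncomputable def kk (v : ι) (z : K) : ℕ := ⌊50 * (P.S.card : ℝ) * P.aa v z / P.AS z⌋₊

theorem Un.AS_nonneg (hz : P.Un z) : 0 ≤ P.AS z := Finset.sum_nonneg fun v _ => hz.aa_nonneg v
theorem Un.AC_nonneg (hz : P.Un z) : 0 ≤ P.AC z := Finset.sum_nonneg fun v _ => hz.aa_nonneg v

theorem Un.kk_le (hz : P.Un z) (h : 0 < P.AS z) (v : ι) :
    (P.kk v z : ℝ) / (50 * P.S.card) * P.AS z ≤ P.aa v z := by
  have hs : (0 : ℝ) < P.S.card := by exact_mod_cast P.s_pos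
  have h0 := hz.aa_nonneg v
  have := Nat.floor_le (by positivity : 0 ≤ 50 * (P.S.card : ℝ) * P.aa v z / P.AS z)
  change (P.kk v z : ℝ) ≤ _ at this
  rw [le_div_iff₀ h] at this
  rw [div_mul_eq_mul_div, div_le_iff₀ (by positivity)]
  linarith

theorem Un.sum_kk_le (hz : P.Un z) : ∑ v ∈ P.S, P.kk v z ≤ 50 * P.S.card := by
  rcases hz.AS_nonneg.eq_or_lt with h | h
  · have : ∀ v ∈ P.S, P.kk v z = 0 := by intro v _; unfold kk; rw [← h]; simp
    rw [Finset.sum_eq_zero this]; exact Nat.zero_le _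
  · have hs : (0 : ℝ) < P.S.card := by exact_mod_cast P.s_pos
    have := Finset.sum_le_sum fun v (_ : v ∈ P.S) => hz.kk_le h v
    rw [← Finset.sum_mul, ← Finset.sum_div] at this
    change _ ≤ P.AS z at this
    have h2 : (∑ v ∈ P.S, (P.kk v z : ℝ)) / (50 * P.S.card) ≤ 1 := by
      by_contra hc
      push Not at hc
      nlinarith
    rw [div_le_one (by positivity)] at h2
    exact_mod_cast h2

theorem Un.le_sum_kk (hz : P.Un z) (h : 0 < P.AS z) : (49 : ℝ) * P.S.card ≤ ∑ v ∈ P.S, (P.kk v z : ℝ) := by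
  have hs : (0 : ℝ) < P.S.card := by exact_mod_cast P.s_pos
  have h1 : ∑ v ∈ P.S, (50 * (P.S.card : ℝ) * P.aa v z / P.AS z) = 50 * P.S.card := by
    rw [← Finset.sum_div, ← Finset.mul_sum]
    change 50 * (P.S.card : ℝ) * P.AS z / P.AS z = _
    field_simp
  have h2 := Finset.sum_le_sum fun v (_ : v ∈ P.S) =>
    (Nat.lt_floor_add_one (50 * (P.S.card : ℝ) * P.aa v z / P.AS z)).le
  rw [h1, Finset.sum_add_distrib, Finset.sum_const, nsmul_eq_mul, mul_one] at h2
  change _ ≤ ∑ v ∈ P.S, (P.kk v z : ℝ) + _ at h2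
  linarith

theorem Fam.class_ineq (hZ : P.Fam Z) (hz : z ∈ Z) (hw : w ∈ Z)
    (hsec : ∀ v ∈ P.S, P.sec v w = P.sec v z) (hk : ∀ v ∈ P.S, P.kk v w = P.kk v z) (N : ℕ)
    (hd : dt N w z ≠ 0) :
    2.94 * min (P.ht w) ((2 * N + 1) * P.ht z) ≤
      P.ht w + (3 * N + 1) * P.ht z + (6 * N + 2) * P.Lc + 2 * N * P.AC z := by
  have uz := hZ.un z hz
  have uw := hZ.un w hw
  have hN : (0 : ℝ) ≤ N := Nat.cast_nonneg N
  have hL := P.Lc_pos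
  have hsec' : ∀ v, P.sec v w = P.sec v z := fun v => by
    by_cases hv : v ∈ P.S
    · exact hsec v hv
    · exact hZ.sec_eq hv hw hz
  have main := uw.ineqN uz hsec' N hd
  have hs : (0 : ℝ) < P.S.card := by exact_mod_cast P.s_pos
  have part1 : P.AC z ≤ ∑ v ∈ P.Sᶜ, min (P.aa v w) ((2 * N + 1) * P.aa v z) := by
    refine Finset.sum_le_sum fun v hv => ?_
    rw [hZ.aa_eq (Finset.mem_compl.mp hv) hw hz]
    have := uz.aa_nonneg v
    exact le_min le_rfl (by nlinarith)
  have part2 : 0.98 * min (P.AS w) ((2 * N + 1) * P.AS z) ≤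
      ∑ v ∈ P.S, min (P.aa v w) ((2 * N + 1) * P.aa v z) := by
    have hnn : 0 ≤ ∑ v ∈ P.S, min (P.aa v w) ((2 * N + 1) * P.aa v z) :=
      Finset.sum_nonneg fun v _ => le_min (uw.aa_nonneg v) (mul_nonneg (by positivity) (uz.aa_nonneg v))
    rcases uz.AS_nonneg.eq_or_lt with h | h
    · refine le_trans ?_ hnn
      have := min_le_right (P.AS w) ((2 * N + 1) * P.AS z)
      rw [← h, mul_zero] at this
      rw [← h, mul_zero]
      linarith
    rcases uw.AS_nonneg.eq_or_lt with h' | h'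
    · refine le_trans ?_ hnn
      have := min_le_left (P.AS w) ((2 * N + 1) * P.AS z)
      rw [← h'] at this
      rw [← h']
      linarith
    have hm : 0 ≤ min (P.AS w) ((2 * N + 1) * P.AS z) := le_min h'.le (by positivity)
    have e1 : ∀ v ∈ P.S, (P.kk v z : ℝ) / (50 * P.S.card) * min (P.AS w) ((2 * N + 1) * P.AS z)
        ≤ min (P.aa v w) ((2 * N + 1) * P.aa v z) := by
      intro v hv
      have hc : 0 ≤ (P.kk v z : ℝ) / (50 * P.S.card) := by positivity
      have a1 := uz.kk_le h v
      have a2 := uw.kk_le h' v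
      rw [hk v hv] at a2
      refine le_min (le_trans (mul_le_mul_of_nonneg_left (min_le_left _ _) hc) a2)
        (le_trans (mul_le_mul_of_nonneg_left (min_le_right _ _) hc) ?_)
      nlinarith
    have e2 := Finset.sum_le_sum e1
    rw [← Finset.sum_mul, ← Finset.sum_div] at e2
    refine le_trans (mul_le_mul_of_nonneg_right ?_ hm) e2
    rw [le_div_iff₀ (by positivity)]
    linarith [uz.le_sum_kk h]
  rw [← Finset.sum_add_sum_compl P.S] at main
  have az := uz.sum_aa.1
  have aw := uw.sum_aa.1
  rw [AS_add_AC] at az aw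
  rw [hZ.AC_eq hw hz] at aw
  have hc := uz.AC_nonneg
  have hNa : 0 ≤ N * P.AC z := by positivity
  have hNL : 0 ≤ N * P.Lc := by positivity
  have q1 : 3 * P.ht w - P.Lc - P.AC z ≤ P.AS w := by linarith
  have q2 : (2 * N + 1) * (3 * P.ht z - P.Lc - P.AC z) ≤ (2 * N + 1) * P.AS z :=
    mul_le_mul_of_nonneg_left (by linarith) (by positivity)
  have q3 : 3 * min (P.ht w) ((2 * N + 1) * P.ht z) - (2 * N + 1) * P.Lc - (2 * N + 1) * P.AC z
      ≤ min (P.AS w) ((2 * N + 1) * P.AS z) := by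
    refine le_min ?_ ?_
    · have := min_le_left (P.ht w) ((2 * N + 1) * P.ht z)
      nlinarith
    · have := min_le_right (P.ht w) ((2 * N + 1) * P.ht z)
      nlinarith
  nlinarith

theorem Fam.large_bound (hZ : P.Fam Z) :
    ((Z.filter fun z => 4 * P.Lc ≤ P.ht z).card : ℝ) ≤ 11 * 412 ^ P.S.card := by
  set Z' := Z.filter fun z => 4 * P.Lc ≤ P.ht z with hZ'
  have hL := P.Lc_pos
  let key : K → ι → Fin 3 × ℕ := fun z v => if v ∈ P.S then (P.sec v z, P.kk v z) else (0, 0)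
  let lab : ι → Finset (Fin 3 × ℕ) := fun v =>
    if v ∈ P.S then Finset.univ ×ˢ Finset.range (50 * P.S.card + 1) else {(0, 0)}
  let wt : ι → Fin 3 × ℕ → ℝ := fun _ l => (50 / 51) ^ l.2
  have hsub : ∀ z ∈ Z', z ∈ Z := fun z hz => (Finset.mem_filter.mp hz).1
  have hmem : ∀ z ∈ Z', ∀ v, key z v ∈ lab v := by
    intro z hz v
    simp only [key, lab]
    split_ifs with hv
    · simp only [Finset.mem_product, Finset.mem_univ, true_and, Finset.mem_range]
      have := (hZ.un z (hsub z hz)).sum_kk_le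
      have h2 := Finset.single_le_sum (f := fun v => P.kk v z) (fun _ _ => Nat.zero_le _) hv
      omega
    · simp
  have hω : ∀ z ∈ Z', ((50 / 51 : ℝ) ^ 50) ^ P.S.card ≤ ∏ v, wt v (key z v) := by
    intro z hz
    have e : ∏ v, wt v (key z v) = (50 / 51 : ℝ) ^ (∑ v ∈ P.S, P.kk v z) := by
      rw [← Finset.prod_pow_eq_pow_sum, ← Finset.univ_inter P.S, ← Finset.prod_ite_mem]
      refine Finset.prod_congr rfl fun v _ => ?_
      simp only [wt, key, Finset.univ_inter]
      split_ifs <;> simp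
    rw [e, ← pow_mul]
    exact pow_le_pow_of_le_one (by norm_num) (by norm_num) (hZ.un z (hsub z hz)).sum_kk_le
  have hfib : ∀ z ∈ Z', (Z'.filter fun w => key w = key z).card ≤ 11 := by
    intro z₀ hz₀
    have hkey : ∀ z ∈ Z'.filter (fun w => key w = key z₀), ∀ w ∈ Z'.filter (fun w => key w = key z₀),
        ∀ v ∈ P.S, P.sec v w = P.sec v z ∧ P.kk v w = P.kk v z := by
      intro z hz w hw v hv
      have h := congrFun ((Finset.mem_filter.mp hw).2.trans (Finset.mem_filter.mp hz).2.symm) v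
      simp only [key, if_pos hv] at h
      exact ⟨congrArg Prod.fst h, congrArg Prod.snd h⟩
    have hin : ∀ z ∈ Z'.filter (fun w => key w = key z₀), z ∈ Z := fun z hz =>
      hsub z (Finset.mem_filter.mp hz).1
    have hh : ∀ z ∈ Z'.filter (fun w => key w = key z₀), 4 * P.Lc ≤ P.ht z := fun z hz =>
      (Finset.mem_filter.mp (Finset.mem_filter.mp hz).1).2
    have hcyc : ∀ z ∈ Z'.filter (fun w => key w = key z₀), z ^ 2 - z + 1 ≠ 0 := fun z hz =>
      (hZ.un z (hin z hz)).cyc (by linarith [hh z hz])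
    have hineq : ∀ N : ℕ, ∀ z ∈ Z'.filter (fun w => key w = key z₀),
        ∀ w ∈ Z'.filter (fun w => key w = key z₀), dt N w z ≠ 0 →
        2.94 * min (P.ht w) ((2 * N + 1) * P.ht z) ≤
          P.ht w + (3 * N + 1) * P.ht z + (6 * N + 2) * P.Lc + 2 * N * P.AC z₀ := by
      intro N z hz w hw hd
      rw [hZ.AC_eq (hsub z₀ hz₀) (hin z hz)]
      exact hZ.class_ineq (hin z hz) (hin w hw) (fun v hv => (hkey z hz w hw v hv).1)
        (fun v hv => (hkey z hz w hw v hv).2) N hd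
    refine class_bound _ P.ht P.Lc (P.AC z₀) hL (hZ.un z₀ (hsub z₀ hz₀)).AC_nonneg
      (fun N z w => dt N w z = 0) hh ?_ ?_ hineq ?_ ?_
    · intro z hz
      have u := hZ.un z (hin z hz)
      have := u.sum_aa.2
      rw [AS_add_AC] at this
      rw [hZ.AC_eq (hsub z₀ hz₀) (hin z hz)]
      linarith [u.AS_nonneg]
    · intro z hz w hw hne
      have := hineq 0 z hz w hw (by rw [dt_zero]; exact sub_ne_zero.mpr hne)
      norm_num at this ⊢
      linarith
    · intro N z hz w _ w' _ h1 h2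
      have u := hZ.un z (hin z hz)
      exact exc_unique u.ne0 u.ne1 (hcyc z hz) N w' h1 h2
    · intro N z hz w _ h1 h2
      have u := hZ.un z (hin z hz)
      exact exc_consec u.ne0 u.ne1 (hcyc z hz) N h1 h2
  have hcount := count_keys Z' key lab wt hmem (fun _ _ => by positivity) _ hω 11
    (fun z hz => by convert hfib z hz)
  have hprod : ∏ v, ∑ l ∈ lab v, wt v l ≤ 153 ^ P.S.card := by
    rw [← prod_ite_card]
    refine Finset.prod_le_prod (fun v _ => Finset.sum_nonneg fun l _ => by positivity) fun v _ => ?_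
    simp only [lab, wt]
    split_ifs with hv
    · rw [Finset.sum_product]
      simp only [Finset.sum_const, Finset.card_univ, Fintype.card_fin, nsmul_eq_mul]
      have hg : ∀ n : ℕ, ∑ i ∈ Finset.range n, (50 / 51 : ℝ) ^ i ≤ 51 := by
        intro n
        rw [geom_sum_eq (by norm_num)]
        have : (0 : ℝ) ≤ (50 / 51) ^ n := by positivity
        rw [div_le_iff_of_neg (by norm_num)]
        linarith
      have := hg (50 * P.S.card + 1)
      push_cast
      linarith
    · simp
  have hfin : (Z'.card : ℝ) * ((50 / 51 : ℝ) ^ 50) ^ P.S.card ≤ 11 * 153 ^ P.S.card :=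
    hcount.trans (mul_le_mul_of_nonneg_left hprod (by norm_num))
  have hp : 0 < ((50 / 51 : ℝ) ^ 50) ^ P.S.card := by positivity
  refine le_of_mul_le_mul_right (hfin.trans ?_) hp
  rw [mul_assoc, ← mul_pow]
  gcongr
  norm_num
end PlaceSys
end EV


namespace EV
open Polynomial.EV

noncomputable def kt (r : ℝ) : ℕ :=
  if h : 0 < r ∧ r ≤ 1 then
    (exists_nat_pow_near_of_lt_one h.1 h.2 (by norm_num : (0 : ℝ) < 1 / 2) (by norm_num)).choose
  else 0

theorem kt_spec (r : ℝ) (h0 : 0 < r) (h1 : r ≤ 1) :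
    (1 / 2 : ℝ) ^ (kt r + 1) < r ∧ r ≤ (1 / 2) ^ kt r := by
  unfold kt
  rw [dif_pos ⟨h0, h1⟩]
  exact (exists_nat_pow_near_of_lt_one h0 h1 (by norm_num : (0 : ℝ) < 1 / 2) (by norm_num)).choose_spec

noncomputable def col (M : ℕ) (t : ℝ) : ℕ := ⌈M * t⌉₊ - 1

theorem col_lt (M : ℕ) (hM : 1 ≤ M) (t : ℝ) (h1 : t ≤ 1) : col M t < M := by
  have : ⌈M * t⌉₊ ≤ M := Nat.ceil_le.mpr (by
    have : (0 : ℝ) ≤ M := Nat.cast_nonneg M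
    nlinarith)
  unfold col; omega

theorem col_near (M : ℕ) (t : ℝ) (h0 : 0 ≤ t) : (col M t : ℝ) ≤ M * t ∧ (M : ℝ) * t ≤ col M t + 1 := by
  have hM : (0 : ℝ) ≤ M := Nat.cast_nonneg M
  have hp : 0 ≤ M * t := by positivity
  unfold col
  rcases Nat.eq_zero_or_pos ⌈(M : ℝ) * t⌉₊ with h | h
  · rw [h]
    have := Nat.ceil_eq_zero.mp h
    constructor
    · simpa using hp
    · simp; linarith
  · rw [Nat.cast_sub h]
    have a := Nat.le_ceil ((M : ℝ) * t)
    have b := Nat.ceil_lt_add_one hp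
    push_cast
    constructor <;> linarith

def Mk (k : ℕ) : ℕ := if k < 3 then 8 else if k < 9 then 4 else 1

theorem Mk_pos (k : ℕ) : 1 ≤ Mk k := by unfold Mk; split_ifs <;> norm_num

theorem Mk_big (k : ℕ) : (2 : ℝ) ^ 17 * (1 / 4) ^ k < (Mk k : ℝ) ^ 6 := by
  have mono : ∀ j, j ≤ k → (1 / 4 : ℝ) ^ k ≤ (1 / 4) ^ j := fun j hj =>
    pow_le_pow_of_le_one (by norm_num) (by norm_num) hj
  unfold Mk
  split_ifs with h1 h2
  · have := mono 0 (Nat.zero_le _)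
    norm_num at this ⊢
    linarith
  · have := mono 3 (by omega)
    norm_num at this ⊢
    linarith
  · have := mono 9 (by omega)
    norm_num at this ⊢
    linarith

noncomputable def ccol (k : ℕ) (x : ℂ) : ℕ × ℕ :=
  (col (Mk k) ((x.re * 2 ^ k + 1) / 2), col (Mk k) ((x.im * 2 ^ k + 1) / 2))

theorem unit_aux (k : ℕ) (a : ℝ) (h : |a| ≤ (1 / 2) ^ k) :
    0 ≤ (a * 2 ^ k + 1) / 2 ∧ (a * 2 ^ k + 1) / 2 ≤ 1 := by
  have h2 : |a * 2 ^ k| ≤ 1 := by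
    rw [abs_mul, abs_of_pos (by positivity : (0 : ℝ) < 2 ^ k)]
    calc _ ≤ (1 / 2 : ℝ) ^ k * 2 ^ k := by gcongr
      _ = 1 := by rw [← mul_pow]; norm_num
  rw [abs_le] at h2
  constructor <;> linarith [h2.1, h2.2]

theorem ccol_mem (k : ℕ) (x : ℂ) (h : ‖x‖ ≤ (1 / 2) ^ k) :
    ccol k x ∈ Finset.range (Mk k) ×ˢ Finset.range (Mk k) := by
  have h1 := unit_aux k x.re ((Complex.abs_re_le_norm x).trans h)
  have h2 := unit_aux k x.im ((Complex.abs_im_le_norm x).trans h)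
  rw [Finset.mem_product, Finset.mem_range, Finset.mem_range]
  exact ⟨col_lt _ (Mk_pos k) _ h1.2, col_lt _ (Mk_pos k) _ h2.2⟩

theorem coord_near (k : ℕ) (a b : ℝ) (ha : |a| ≤ (1 / 2) ^ k) (hb : |b| ≤ (1 / 2) ^ k)
    (h : col (Mk k) ((a * 2 ^ k + 1) / 2) = col (Mk k) ((b * 2 ^ k + 1) / 2)) :
    (Mk k : ℝ) ^ 2 * (a - b) ^ 2 ≤ 4 * (1 / 4) ^ k := by
  have h1 := col_near (Mk k) _ (unit_aux k a ha).1
  have h2 := col_near (Mk k) _ (unit_aux k b hb).1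
  rw [h] at h1
  have h3 : |(Mk k : ℝ) * (a - b) * 2 ^ k| ≤ 2 := by
    rw [abs_le]
    constructor <;> linarith [h1.1, h1.2, h2.1, h2.2]
  have h4 : ((Mk k : ℝ) * (a - b) * 2 ^ k) ^ 2 ≤ 2 ^ 2 := sq_le_sq' (abs_le.mp h3).1 (abs_le.mp h3).2
  have h5 : (2 ^ k : ℝ) ^ 2 * (1 / 4) ^ k = 1 := by
    rw [← pow_mul, mul_comm k 2, pow_mul, ← mul_pow]; norm_num
  calc (Mk k : ℝ) ^ 2 * (a - b) ^ 2 = ((Mk k : ℝ) * (a - b) * 2 ^ k) ^ 2 * (1 / 4) ^ k := by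
        linear_combination - ((Mk k : ℝ) ^ 2 * (a - b) ^ 2) * h5
    _ ≤ 2 ^ 2 * (1 / 4) ^ k := by gcongr
    _ = _ := by norm_num

theorem ccol_near (k : ℕ) (x y : ℂ) (hx : ‖x‖ ≤ (1 / 2) ^ k) (hy : ‖y‖ ≤ (1 / 2) ^ k)
    (hx' : (1 / 2 : ℝ) ^ (k + 1) < ‖x‖) (hy' : (1 / 2 : ℝ) ^ (k + 1) < ‖y‖)
    (h : ccol k x = ccol k y) : ‖x - y‖ ^ 3 < ‖x‖ * ‖y‖ / 4 := by
  have h1 := coord_near k x.re y.re ((Complex.abs_re_le_norm x).trans hx)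
    ((Complex.abs_re_le_norm y).trans hy) (congrArg Prod.fst h)
  have h2 := coord_near k x.im y.im ((Complex.abs_im_le_norm x).trans hx)
    ((Complex.abs_im_le_norm y).trans hy) (congrArg Prod.snd h)
  have h3 : ‖x - y‖ ^ 2 = (x.re - y.re) ^ 2 + (x.im - y.im) ^ 2 := by
    rw [Complex.sq_norm, Complex.normSq_apply]; simp; ring
  have hM : (0 : ℝ) < Mk k := by exact_mod_cast Mk_pos k
  have h4 : (Mk k : ℝ) ^ 2 * ‖x - y‖ ^ 2 ≤ 8 * (1 / 4) ^ k := by rw [h3]; linarith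
  have hq : (0 : ℝ) < (1 / 4) ^ k := by positivity
  have h5 : ((Mk k : ℝ) ^ 2 * ‖x - y‖ ^ 2) ^ 3 ≤ (8 * (1 / 4) ^ k) ^ 3 :=
    pow_le_pow_left₀ (by positivity) h4 3
  have hbig := Mk_big k
  have e2 : ((1 / 2 : ℝ) ^ (k + 1)) ^ 2 = (1 / 4) ^ k / 4 := by
    rw [← pow_mul, mul_comm, pow_mul, pow_succ]; norm_num; ring
  have hxy : (1 / 4 : ℝ) ^ k / 4 < ‖x‖ * ‖y‖ := by
    rw [← e2, sq]
    exact mul_lt_mul'' hx' hy' (by positivity) (by positivity)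
  have h6 : (‖x - y‖ ^ 3) ^ 2 < ((1 / 4 : ℝ) ^ k / 16) ^ 2 := by
    have h7 : (Mk k : ℝ) ^ 6 * (‖x - y‖ ^ 3) ^ 2 ≤ 512 * ((1 / 4) ^ k) ^ 3 := by
      calc _ = ((Mk k : ℝ) ^ 2 * ‖x - y‖ ^ 2) ^ 3 := by ring
        _ ≤ _ := h5
        _ = _ := by ring
    have h8 : 512 * ((1 / 4 : ℝ) ^ k) ^ 3 < (Mk k : ℝ) ^ 6 * ((1 / 4 : ℝ) ^ k / 16) ^ 2 := by
      calc 512 * ((1 / 4 : ℝ) ^ k) ^ 3 = (2 ^ 17 * (1 / 4) ^ k) * ((1 / 4 : ℝ) ^ k / 16) ^ 2 := by ring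
        _ < _ := by gcongr
    exact lt_of_mul_lt_mul_left (h7.trans_lt h8) (by positivity)
  have h9 := lt_of_pow_lt_pow_left₀ 2 (by positivity) h6
  linarith

theorem geom_le (q : ℝ) (h0 : 0 < q) (h1 : q < 1) (n : ℕ) :
    ∑ i ∈ Finset.range n, q ^ i ≤ 1 / (1 - q) := by
  rw [geom_sum_eq h1.ne, ← neg_div_neg_eq]
  have : 0 < q ^ n := by positivity
  have h2 : 0 < 1 - q := by linarith
  rw [neg_sub, neg_sub]
  gcongr
  linarith

theorem Mk_sum (q : ℝ) (h0 : 0 < q) (h1 : q < 1) (n : ℕ) :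
    ∑ k ∈ Finset.range n, (Mk k : ℝ) ^ 2 * q ^ k ≤
      1 / (1 - q) + (63 * (1 + q + q ^ 2) + 15 * (q ^ 3 + q ^ 4 + q ^ 5 + q ^ 6 + q ^ 7 + q ^ 8)) := by
  have e : ∑ k ∈ Finset.range n, (Mk k : ℝ) ^ 2 * q ^ k = ∑ k ∈ Finset.range n, q ^ k
      + ∑ k ∈ Finset.range n, (if k < 9 then ((Mk k : ℝ) ^ 2 - 1) * q ^ k else 0) := by
    rw [← Finset.sum_add_distrib]
    refine Finset.sum_congr rfl fun k _ => ?_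
    split_ifs with h
    · ring
    · have : Mk k = 1 := by unfold Mk; rw [if_neg (by omega), if_neg h]
      rw [this]; norm_num
  rw [e]
  refine add_le_add (geom_le q h0 h1 n) ?_
  rw [← Finset.sum_filter]
  have hM : ∀ k, (0 : ℝ) ≤ ((Mk k : ℝ) ^ 2 - 1) * q ^ k := by
    intro k
    have : (1 : ℝ) ≤ Mk k := by exact_mod_cast Mk_pos k
    have : (0 : ℝ) ≤ (Mk k : ℝ) ^ 2 - 1 := by nlinarith
    positivity
  calc _ ≤ ∑ k ∈ Finset.range 9, ((Mk k : ℝ) ^ 2 - 1) * q ^ k := by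
        refine Finset.sum_le_sum_of_subset_of_nonneg ?_ fun k _ _ => hM k
        intro k hk
        rw [Finset.mem_filter] at hk
        exact Finset.mem_range.mpr hk.2
    _ = _ := by
        simp only [Finset.sum_range_succ, Finset.sum_range_zero, Mk]
        norm_num
        ring

namespace PlaceSys
variable {K : Type*} [Field K] [CharZero K] {ι : Type*} [Fintype ι] (P : PlaceSys K ι) {z w : K}

noncomputable def rho (v : ι) (z : K) : K := xv z (P.sec v z) / xv z (P.sec v z + 1)

noncomputable def kz (v : ι) (z : K) : ℕ := kt (P.av v (P.rho v z))

noncomputable def cz (v : ι) (z : K) : ℕ × ℕ :=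
  if h : v ∈ P.arch then ccol (P.kz v z) ((P.emb v h).choose (P.rho v z)) else (0, 0)

variable {P}
theorem Un.rho_pos (h : P.Un z) (v : ι) : 0 < P.av v (P.rho v z) :=
  (P.av v).pos (div_ne_zero (h.xv_ne _) (h.xv_ne _))

theorem Un.rho_le (h : P.Un z) (v : ι) : P.av v (P.rho v z) ≤ 1 := by
  unfold rho
  rw [map_div₀, div_le_one ((P.av v).pos (h.xv_ne _))]
  exact mm_le v z _

theorem Un.x_rho (h : P.Un z) (v : ι) : xv z (P.sec v z) = xv z (P.sec v z + 1) * P.rho v z := by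
  unfold rho
  have := h.xv_ne (P.sec v z + 1)
  field_simp

theorem Un.x_rho2 (h : P.Un z) (v : ι) :
    xv z (P.sec v z + 2) = - (xv z (P.sec v z + 1) * (1 + P.rho v z)) := by
  have := h.x_rho v
  have := xv_sum z (P.sec v z)
  linear_combination this - h.x_rho v

theorem Un.rho_le_one_add (h : P.Un z) (v : ι) : P.av v (P.rho v z) ≤ P.av v (1 + P.rho v z) := by
  have h1 : P.mm v z ≤ _ := mm_le v z (P.sec v z + 2)
  unfold mm at h1
  rw [h.x_rho2 v, h.x_rho v, (P.av v).map_neg, (P.av v).map_mul, (P.av v).map_mul] at h1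
  exact le_of_mul_le_mul_left h1 ((P.av v).pos (h.xv_ne _))

theorem Un.one_add_arch (h : P.Un z) (v : ι) : 1 / 2 ≤ P.av v (1 + P.rho v z) := by
  have h1 := h.rho_le_one_add v
  have h2 := (P.av v).add_le (1 + P.rho v z) (- P.rho v z)
  rw [(P.av v).map_neg, add_neg_cancel_right, (P.av v).map_one] at h2
  linarith

theorem Un.one_add_fin (h : P.Un z) (v : ι) (hv : v ∉ P.arch) : 1 ≤ P.av v (1 + P.rho v z) := by
  have h1 := h.rho_le_one_add v
  have h2 := P.ultra v hv (1 + P.rho v z) (- P.rho v z)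
  rw [(P.av v).map_neg, add_neg_cancel_right, (P.av v).map_one, max_eq_left h1] at h2
  exact h2

variable (P) in
noncomputable def px (v : ι) (z : K) : ℝ := P.av v (xv z 0) * P.av v (xv z 1) * P.av v (xv z 2)

theorem mul_fin3 {M : Type*} [CommMonoid M] (f : Fin 3 → M) (i : Fin 3) :
    f 0 * f 1 * f 2 = f i * f (i + 1) * f (i + 2) :=
  sum_fin3 (M := Additive M) f i

theorem Un.px_eq (h : P.Un z) (v : ι) : P.px v z =
    P.av v (xv z (P.sec v z + 1)) ^ 3 * (P.av v (P.rho v z) * P.av v (1 + P.rho v z)) := by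
  have := mul_fin3 (fun i => P.av v (xv z i)) (P.sec v z)
  unfold px
  rw [this, h.x_rho2 v, h.x_rho v, (P.av v).map_neg, (P.av v).map_mul, (P.av v).map_mul]
  ring

theorem Un.dt_rho (hz : P.Un z) (hw : P.Un w) (v : ι) (hs : P.sec v w = P.sec v z) :
    P.av v (w - z) = P.av v (xv z (P.sec v z + 1)) * P.av v (xv w (P.sec v w + 1)) *
      P.av v (P.rho v z - P.rho v w) := by
  have h1 : w - z = xv w (P.sec v z) * xv z (P.sec v z + 1) - xv w (P.sec v z + 1) * xv z (P.sec v z) := by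
    rw [← dt_zero, dt_eq 0 w z (P.sec v z)]
    simp [padeV, padeW]
  have h2 := hw.x_rho v
  rw [hs] at h2
  rw [h1, h2, hz.x_rho v, hs]
  rw [← (P.av v).map_neg, ← (P.av v).map_mul, ← (P.av v).map_mul]
  congr 1
  ring

theorem Un.cube_of (hz : P.Un z) (hw : P.Un w) (v : ι) (hs : P.sec v w = P.sec v z) (c : ℝ) 
    (h : P.av v (P.rho v z - P.rho v w) ^ 3 ≤ c) :
    P.av v (w - z) ^ 3 ≤ P.av v (xv z (P.sec v z + 1)) ^ 3 * P.av v (xv w (P.sec v w + 1)) ^ 3 * c := by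
  rw [hz.dt_rho hw v hs, mul_pow, mul_pow]
  exact mul_le_mul_of_nonneg_left h (mul_nonneg (pow_nonneg ((P.av v).nonneg _) _) (pow_nonneg ((P.av v).nonneg _) _))

theorem Un.cube_fin (hz : P.Un z) (hw : P.Un w) (v : ι) (hs : P.sec v w = P.sec v z) (hv : v ∉ P.arch)
    (h : P.av v (P.rho v z - P.rho v w) ^ 3 ≤ P.av v (P.rho v z) * P.av v (P.rho v w)) :
    P.av v (w - z) ^ 3 ≤ P.px v z * P.px v w := by
  refine (hz.cube_of hw v hs _ h).trans ?_
  rw [hz.px_eq v, hw.px_eq v]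
  have a := hz.one_add_fin v hv
  have b := hw.one_add_fin v hv
  have c := hz.rho_pos v
  have d := hw.rho_pos v
  have e := (P.av v).pos (hz.xv_ne (P.sec v z + 1))
  have f := (P.av v).pos (hw.xv_ne (P.sec v w + 1))
  have hab : 1 ≤ P.av v (1 + P.rho v z) * P.av v (1 + P.rho v w) := one_le_mul_of_one_le_of_one_le a b
  calc _ = (P.av v (xv z (P.sec v z + 1)) ^ 3 * P.av v (xv w (P.sec v w + 1)) ^ 3 * (P.av v (P.rho v z) * P.av v (P.rho v w))) * 1 := by ring
    _ ≤ (P.av v (xv z (P.sec v z + 1)) ^ 3 * P.av v (xv w (P.sec v w + 1)) ^ 3 * (P.av v (P.rho v z) * P.av v (P.rho v w))) * (P.av v (1 + P.rho v z) * P.av v (1 + P.rho v w)) := by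
        gcongr
    _ = _ := by ring

theorem Un.cube_fin_key (hz : P.Un z) (hw : P.Un w) (v : ι) (hs : P.sec v w = P.sec v z) (hv : v ∉ P.arch)
    (hk : P.kz v w = P.kz v z) : P.av v (w - z) ^ 3 ≤ P.px v z * P.px v w := by
  refine hz.cube_fin hw v hs hv ?_
  obtain ⟨z1, z2⟩ := kt_spec _ (hz.rho_pos v) (hz.rho_le v)
  obtain ⟨w1, w2⟩ := kt_spec _ (hw.rho_pos v) (hw.rho_le v)
  change kt (P.av v (P.rho v w)) = kt (P.av v (P.rho v z)) at hk
  rw [hk] at w1 w2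
  have z0 := hz.rho_pos v
  have w0 := hw.rho_pos v
  have zl := hz.rho_le v
  have wl := hw.rho_le v
  have hdz := P.disc v hv (P.rho v z)
  have hdw := P.disc v hv (P.rho v w)
  have hu : P.av v (P.rho v z - P.rho v w) ≤ max (P.av v (P.rho v z)) (P.av v (P.rho v w)) := by
    have := P.ultra v hv (P.rho v z) (- P.rho v w)
    rwa [(P.av v).map_neg, ← sub_eq_add_neg] at this
  have key : ∀ (k : ℕ) (a b : ℝ), 0 < a → 0 < b → a ≤ 1 → (a < 1 → a ≤ 1 / 2) → (b < 1 → b ≤ 1 / 2) →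
      (1 / 2 : ℝ) ^ (k + 1) < a → a ≤ (1 / 2) ^ k → (1 / 2 : ℝ) ^ (k + 1) < b → b ≤ a → a ^ 3 ≤ a * b := by
    intro k a b ha hb ha1 da db h1 h2 h3 h4
    have : a ^ 2 ≤ b := by
      rcases lt_or_ge b 1 with hb1 | hb1
      · rcases lt_or_ge a 1 with ha2 | ha2
        · have := da ha2
          rw [pow_succ] at h3
          nlinarith
        · have := db hb1
          have hk0 : k = 0 := by
            by_contra hk0
            have : (1 / 2 : ℝ) ^ k ≤ (1 / 2) ^ 1 :=
              pow_le_pow_of_le_one (by norm_num) (by norm_num) (Nat.one_le_iff_ne_zero.mpr hk0)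
            linarith
          rw [hk0] at h3
          norm_num at h3
          linarith
      · nlinarith
    nlinarith
  refine (pow_le_pow_left₀ ((P.av v).nonneg _) hu 3).trans ?_
  rcases le_total (P.av v (P.rho v z)) (P.av v (P.rho v w)) with hle | hle
  · rw [max_eq_right hle, mul_comm]
    exact key _ _ _ w0 z0 wl hdw hdz w1 w2 z1 hle
  · rw [max_eq_left hle]
    exact key _ _ _ z0 w0 zl hdz hdw z1 z2 w1 hle

theorem Un.cube_out (hz : P.Un z) (hw : P.Un w) (v : ι) (hv : v ∉ P.arch)
    (hx : (fun i => P.av v (xv z i)) = fun i => P.av v (xv w i)) :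
    P.av v (w - z) ^ 3 ≤ P.px v z * P.px v w := by
  have hs : P.sec v w = P.sec v z := by unfold sec; rw [hx]
  refine hz.cube_fin hw v hs hv ?_
  have he : P.av v (P.rho v w) = P.av v (P.rho v z) := by
    unfold rho
    rw [hs, map_div₀, map_div₀, congrFun hx, congrFun hx]
  have hu : P.av v (P.rho v z - P.rho v w) ≤ P.av v (P.rho v z) := by
    have := P.ultra v hv (P.rho v z) (- P.rho v w)
    rwa [(P.av v).map_neg, ← sub_eq_add_neg, he, max_self] at this
  rw [he]
  refine (pow_le_pow_left₀ ((P.av v).nonneg _) hu 3).trans ?_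
  have := hz.rho_pos v
  have := hz.rho_le v
  nlinarith [mul_pos (hz.rho_pos v) (hz.rho_pos v)]

theorem Un.cube_arch (hz : P.Un z) (hw : P.Un w) (v : ι) (hs : P.sec v w = P.sec v z) (hv : v ∈ P.arch)
    (hk : P.kz v w = P.kz v z) (hc : P.cz v w = P.cz v z) :
    P.av v (w - z) ^ 3 < P.px v z * P.px v w := by
  obtain ⟨z1, z2⟩ := kt_spec _ (hz.rho_pos v) (hz.rho_le v)
  obtain ⟨w1, w2⟩ := kt_spec _ (hw.rho_pos v) (hw.rho_le v)
  have hk' := hk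
  change kt (P.av v (P.rho v w)) = kt (P.av v (P.rho v z)) at hk'
  rw [hk'] at w1 w2
  unfold cz at hc
  rw [dif_pos hv, dif_pos hv, hk] at hc
  have hσ := (P.emb v hv).choose_spec
  set σ := (P.emb v hv).choose
  have h3 : P.av v (P.rho v z - P.rho v w) ^ 3 < P.av v (P.rho v z) * P.av v (P.rho v w) / 4 := by
    have hkz : kt (P.av v (P.rho v z)) = P.kz v z := rfl
    rw [hkz] at z1 z2 w1 w2
    rw [hσ (P.rho v z - P.rho v w), hσ (P.rho v z), hσ (P.rho v w), map_sub]
    refine ccol_near (P.kz v z) _ _ ?_ ?_ ?_ ?_ hc.symm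
    all_goals (rw [← hσ]; assumption)
  have a := hz.one_add_arch v
  have b := hw.one_add_arch v
  have c := hz.rho_pos v
  have d := hw.rho_pos v
  have e := (P.av v).pos (hz.xv_ne (P.sec v z + 1))
  have f := (P.av v).pos (hw.xv_ne (P.sec v w + 1))
  have hab : 1 / 4 ≤ P.av v (1 + P.rho v z) * P.av v (1 + P.rho v w) := by nlinarith
  rw [hz.dt_rho hw v hs, mul_pow, mul_pow, hz.px_eq v, hw.px_eq v]
  calc _ < P.av v (xv z (P.sec v z + 1)) ^ 3 * P.av v (xv w (P.sec v w + 1)) ^ 3 *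
          (P.av v (P.rho v z) * P.av v (P.rho v w) / 4) := by gcongr
    _ = (P.av v (xv z (P.sec v z + 1)) ^ 3 * P.av v (xv w (P.sec v w + 1)) ^ 3 * (P.av v (P.rho v z) * P.av v (P.rho v w))) * (1 / 4) := by ring
    _ ≤ (P.av v (xv z (P.sec v z + 1)) ^ 3 * P.av v (xv w (P.sec v w + 1)) ^ 3 * (P.av v (P.rho v z) * P.av v (P.rho v w))) * (P.av v (1 + P.rho v z) * P.av v (1 + P.rho v w)) := by
        gcongr
    _ = _ := by ring

theorem Un.prod_px (h : P.Un z) : ∏ v, P.px v z ^ P.e v = 1 := by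
  unfold px
  simp only [mul_pow, Finset.prod_mul_distrib, h.prod_eq, mul_one]

theorem Fam.tiny_unique {Z : Finset K} (hZ : P.Fam Z) (hz : z ∈ Z) (hw : w ∈ Z)
    (hsec : ∀ v ∈ P.S, P.sec v w = P.sec v z) (hk : ∀ v ∈ P.S, P.kz v w = P.kz v z)
    (hc : ∀ v ∈ P.S, P.cz v w = P.cz v z) : w = z := by
  by_contra hne
  have uz := hZ.un z hz
  have uw := hZ.un w hw
  have hd : w - z ≠ 0 := sub_ne_zero.mpr hne
  have hp := P.prod_le (w - z) (P.O.sub_mem uw.m0 uz.m0) hd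
  have hlt : ∏ v, (P.av v (w - z) ^ 3) ^ P.e v < ∏ v, (P.px v z * P.px v w) ^ P.e v := by
    have hpos : ∀ v, 0 < P.av v (w - z) ^ 3 := fun v => pow_pos ((P.av v).pos hd) 3
    refine Finset.prod_lt_prod (fun v _ => pow_pos (hpos v) _) (fun v _ => ?_) ?_
    · refine pow_le_pow_left₀ (hpos v).le ?_ _
      by_cases hv : v ∈ P.arch
      · have hS := P.arch_sub hv
        exact (uz.cube_arch uw v (hsec v hS) hv (hk v hS) (hc v hS)).le
      · by_cases hS : v ∈ P.S
        · exact uz.cube_fin_key uw v (hsec v hS) hv (hk v hS)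
        · exact uz.cube_out uw v hv (hZ.xv_eq hS hz hw)
    · obtain ⟨v, hv⟩ := P.arch_ne
      have hS := P.arch_sub hv
      refine ⟨v, Finset.mem_univ _, pow_lt_pow_left₀ ?_ (hpos v).le (Nat.one_le_iff_ne_zero.mp (P.e_pos v))⟩
      exact uz.cube_arch uw v (hsec v hS) hv (hk v hS) (hc v hS)
  have e1 : ∏ v, (P.px v z * P.px v w) ^ P.e v = 1 := by
    simp only [mul_pow, Finset.prod_mul_distrib]
    rw [uz.prod_px, uw.prod_px, one_mul]
  have e2 : ∏ v, (P.av v (w - z) ^ 3) ^ P.e v = (∏ v, P.av v (w - z) ^ P.e v) ^ 3 := by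
    rw [← Finset.prod_pow]
    refine Finset.prod_congr rfl fun v _ => ?_
    rw [← pow_mul, ← pow_mul, mul_comm]
  rw [e1, e2] at hlt
  have := one_le_pow₀ hp (n := 3)
  linarith

end PlaceSys
end EV


namespace EV
open Polynomial.EV
namespace PlaceSys
variable {K : Type*} [Field K] [CharZero K] {ι : Type*} [Fintype ι] {P : PlaceSys K ι} {z w : K} {Z : Finset K}

theorem Un.kz_le (h : P.Un z) (v : ι) : (P.e v : ℝ) * P.kz v z * Real.log 2 ≤ P.aa v z := by
  obtain ⟨z1, z2⟩ := kt_spec _ (h.rho_pos v) (h.rho_le v)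
  have hkz : kt (P.av v (P.rho v z)) = P.kz v z := rfl
  rw [hkz] at z2
  have h1 := Real.log_le_log (h.rho_pos v) z2
  have e1 : P.av v (P.rho v z) = P.mm v z / P.av v (xv z (P.sec v z + 1)) := by
    unfold rho mm
    rw [map_div₀]
  have hy := (P.av v).pos (h.xv_ne (P.sec v z + 1))
  rw [e1, Real.log_div (h.mm_pos v).ne' hy.ne', Real.log_pow, one_div, Real.log_inv] at h1
  have h2 := Real.log_le_log hy (P.le_mu v z (P.sec v z + 1))
  have he : (0 : ℝ) ≤ P.e v := Nat.cast_nonneg _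
  unfold aa mx mn
  nlinarith

theorem Lc_eq : P.Lc = Real.log 2 * ((∑ v ∈ P.arch, P.e v : ℕ) : ℝ) := by
  unfold Lc bt B
  rw [Nat.cast_sum, Finset.mul_sum]
  rw [← Finset.sum_subset (Finset.subset_univ P.arch)]
  · refine Finset.sum_congr rfl fun v hv => ?_
    rw [if_pos hv, mul_comm]
  · intro v _ hv
    rw [if_neg hv]; simp

theorem Un.sum_kz_le (h : P.Un z) (ht : P.ht z < 4 * P.Lc) :
    ∑ v ∈ P.S, P.e v * P.kz v z ≤ 12 * ∑ v ∈ P.arch, P.e v := by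
  have h1 := h.sum_aa.2
  rw [AS_add_AC] at h1
  have h2 := h.AC_nonneg
  have h3 : (∑ v ∈ P.S, (P.e v : ℝ) * P.kz v z) * Real.log 2 ≤ P.AS z := by
    rw [Finset.sum_mul]
    exact Finset.sum_le_sum fun v _ => h.kz_le v
  have hl : 0 < Real.log 2 := Real.log_pos (by norm_num)
  rw [Lc_eq] at ht
  have : (∑ v ∈ P.S, (P.e v : ℝ) * P.kz v z) ≤ 12 * ((∑ v ∈ P.arch, P.e v : ℕ) : ℝ) := by
    refine le_of_mul_le_mul_right ?_ hl
    linarith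
  exact_mod_cast this

theorem Fam.tiny_bound (hZ : P.Fam Z) :
    ((Z.filter fun z => P.ht z < 4 * P.Lc).card : ℝ) ≤ 2000 ^ P.S.card := by
  set Z' := Z.filter fun z => P.ht z < 4 * P.Lc with hZ'
  set n12 := 12 * ∑ v ∈ P.arch, P.e v with hn
  let key : K → ι → Fin 3 × (Σ _ : ℕ, ℕ × ℕ) := fun z v =>
    if v ∈ P.S then (P.sec v z, ⟨P.kz v z, P.cz v z⟩) else (0, ⟨0, (0, 0)⟩)
  let cl : ι → ℕ → Finset (ℕ × ℕ) := fun v k =>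
    if v ∈ P.arch then Finset.range (Mk k) ×ˢ Finset.range (Mk k) else {(0, 0)}
  let lab : ι → Finset (Fin 3 × (Σ _ : ℕ, ℕ × ℕ)) := fun v =>
    if v ∈ P.S then Finset.univ ×ˢ (Finset.range (n12 + 1)).sigma (cl v) else {(0, ⟨0, (0, 0)⟩)}
  let wt : ι → Fin 3 × (Σ _ : ℕ, ℕ × ℕ) → ℝ := fun v l => (24 / 25) ^ (P.e v * l.2.1)
  have hsub : ∀ z ∈ Z', z ∈ Z := fun z hz => (Finset.mem_filter.mp hz).1
  have hmem : ∀ z ∈ Z', ∀ v, key z v ∈ lab v := by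
    intro z hz v
    have u := hZ.un z (hsub z hz)
    simp only [key, lab]
    split_ifs with hv
    · simp only [Finset.mem_product, Finset.mem_univ, true_and, Finset.mem_range, Finset.mem_sigma]
      constructor
      · have := u.sum_kz_le (Finset.mem_filter.mp hz).2
        have h2 := Finset.single_le_sum (f := fun v => P.e v * P.kz v z) (fun _ _ => Nat.zero_le _) hv
        have h3 := P.e_pos v
        nlinarith
      · simp only [cl, cz]
        split_ifs with ha
        · refine ccol_mem _ _ ?_
          rw [← (P.emb v ha).choose_spec]
          exact (kt_spec _ (u.rho_pos v) (u.rho_le v)).2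
        · simp
    · simp
  have hω : ∀ z ∈ Z', (24 / 25 : ℝ) ^ n12 ≤ ∏ v, wt v (key z v) := by
    intro z hz
    have e : ∏ v, wt v (key z v) = (24 / 25 : ℝ) ^ (∑ v ∈ P.S, P.e v * P.kz v z) := by
      rw [← Finset.prod_pow_eq_pow_sum, ← Finset.univ_inter P.S, ← Finset.prod_ite_mem]
      refine Finset.prod_congr rfl fun v _ => ?_
      simp only [wt, key]
      split_ifs <;> simp
    rw [e]
    exact pow_le_pow_of_le_one (by norm_num) (by norm_num)
      ((hZ.un z (hsub z hz)).sum_kz_le (Finset.mem_filter.mp hz).2)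
  have hfib : ∀ z ∈ Z', (Z'.filter fun w => key w = key z).card ≤ 1 := by
    intro z₀ hz₀
    rw [Finset.card_le_one]
    intro z hz w hw
    have h : ∀ v ∈ P.S, P.sec v w = P.sec v z ∧ P.kz v w = P.kz v z ∧ P.cz v w = P.cz v z := by
      intro v hv
      have h := congrFun ((Finset.mem_filter.mp hw).2.trans (Finset.mem_filter.mp hz).2.symm) v
      simp only [key, if_pos hv, Prod.mk.injEq, Sigma.mk.injEq, heq_eq_eq] at h
      exact h
    exact (hZ.tiny_unique (hsub z (Finset.mem_filter.mp hz).1) (hsub w (Finset.mem_filter.mp hw).1)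
      (fun v hv => (h v hv).1) (fun v hv => (h v hv).2.1) (fun v hv => (h v hv).2.2)).symm
  have hcount := count_keys Z' key lab wt hmem (fun _ _ => by positivity) _ hω 1
    (fun z hz => by convert hfib z hz)
  have hprod : ∏ v, ∑ l ∈ lab v, wt v l ≤ 2000 ^ P.S.card * (24 / 25 : ℝ) ^ n12 := by
    have e : (24 / 25 : ℝ) ^ n12 = ∏ v, (if v ∈ P.arch then (24 / 25 : ℝ) ^ (12 * P.e v) else 1) := by
      rw [hn, Finset.mul_sum, ← Finset.prod_pow_eq_pow_sum, Finset.prod_ite_mem, Finset.univ_inter]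
    rw [← prod_ite_card, e, ← Finset.prod_mul_distrib]
    refine Finset.prod_le_prod (fun v _ => Finset.sum_nonneg fun l _ => by positivity) fun v _ => ?_
    by_cases hv : v ∈ P.S
    · simp only [lab, wt, if_pos hv]
      rw [Finset.sum_product]
      simp only [Finset.sum_const, Finset.card_univ, Fintype.card_fin, nsmul_eq_mul, Finset.sum_sigma, cl]
      by_cases ha : v ∈ P.arch
      · simp only [if_pos ha, Finset.card_product, Finset.card_range]
        have e2 : ∀ k, (((Mk k * Mk k : ℕ)) : ℝ) * (24 / 25 : ℝ) ^ (P.e v * k) = (Mk k : ℝ) ^ 2 * ((24 / 25 : ℝ) ^ P.e v) ^ k := by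
          intro k
          rw [pow_mul]; push_cast; ring
        simp only [e2]
        rcases P.e_arch v ha with he | he
        · rw [he]
          have := Mk_sum ((24 / 25) ^ 1) (by norm_num) (by norm_num) (n12 + 1)
          norm_num at this ⊢
          linarith
        · rw [he]
          have := Mk_sum ((24 / 25) ^ 2) (by norm_num) (by norm_num) (n12 + 1)
          norm_num at this ⊢
          linarith
      · simp only [if_neg ha, P.e_fin v ha, one_mul, Finset.card_singleton]
        have := geom_le (24 / 25) (by norm_num) (by norm_num) (n12 + 1)
        norm_num at this ⊢
        linarith
    · have ha : v ∉ P.arch := fun h => hv (P.arch_sub h)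
      simp only [lab, wt, if_neg hv, if_neg ha]
      simp
  have hp : 0 < (24 / 25 : ℝ) ^ n12 := by positivity
  refine le_of_mul_le_mul_right ?_ hp
  refine hcount.trans ?_
  rw [Nat.cast_one, one_mul]
  exact hprod

theorem Fam.bound (hZ : P.Fam Z) : Z.card ≤ 3 * 7 ^ (4 * P.S.card) := by
  have h1 := hZ.tiny_bound
  have h2 := hZ.large_bound
  have h3 : (Z.card : ℝ) = ((Z.filter fun z => P.ht z < 4 * P.Lc).card : ℝ)
      + ((Z.filter fun z => 4 * P.Lc ≤ P.ht z).card : ℝ) := by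
    rw [← Finset.card_filter_add_card_filter_not (fun z => P.ht z < 4 * P.Lc)]
    push_cast
    simp only [not_lt]
  have hs := P.s_pos
  have h4 : (11 * 412 ^ P.S.card : ℝ) ≤ 2 * 2401 ^ P.S.card := by
    obtain ⟨n, hn⟩ := Nat.exists_eq_succ_of_ne_zero hs.ne'
    rw [hn, pow_succ, pow_succ]
    have : (412 : ℝ) ^ n ≤ 2401 ^ n := by gcongr; norm_num
    have : (0 : ℝ) ≤ 412 ^ n := by positivity
    linarith
  have h5 : (2000 : ℝ) ^ P.S.card ≤ 2401 ^ P.S.card := by gcongr; norm_num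
  have : (Z.card : ℝ) ≤ ((3 * 7 ^ (4 * P.S.card) : ℕ) : ℝ) := by
    push_cast
    rw [pow_mul]
    norm_num
    linarith
  exact_mod_cast this
end PlaceSys
end EV


namespace EV
variable {K : Type*} [Field K] [NumberField K]

noncomputable abbrev fav (v : HeightOneSpectrum (𝓞 K)) : AbsoluteValue K ℝ := NumberField.HeightOneSpectrum.adicAbv K v

theorem fav_disc (v : HeightOneSpectrum (𝓞 K)) (x : K) (h : fav v x < 1) : fav v x ≤ 1 / 2 := by
  by_cases hx : x = 0
  · subst hx; simp
  have hn := NumberField.HeightOneSpectrum.one_lt_absNorm v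
  rw [NumberField.HeightOneSpectrum.adicAbv_def] at h ⊢
  have hv : v.valuation K x ≠ 0 := (Valuation.ne_zero_iff _).mpr hx
  rw [WithZeroMulInt.toNNReal_neg_apply _ hv] at h ⊢
  set n := Multiplicative.toAdd (WithZero.unzero hv) with hnn
  have hN : (2 : ℝ) ≤ (Ideal.absNorm v.asIdeal : ℝ) := by exact_mod_cast hn
  push_cast at h ⊢
  have hneg : n < 0 := by
    by_contra hc
    push Not at hc
    have := one_le_zpow₀ (by linarith : (1 : ℝ) ≤ (Ideal.absNorm v.asIdeal : ℝ)) hc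
    linarith
  calc (Ideal.absNorm v.asIdeal : ℝ) ^ n ≤ (Ideal.absNorm v.asIdeal : ℝ) ^ (-1 : ℤ) :=
        zpow_le_zpow_right₀ (by linarith) (by omega)
    _ ≤ 1 / 2 := by
        rw [zpow_neg_one, one_div]
        exact inv_anti₀ (by norm_num) hN

theorem fav_congr (v : HeightOneSpectrum (𝓞 K)) {x y : K} (h : v.valuation K x = v.valuation K y) :
    fav v x = fav v y := by
  rw [NumberField.HeightOneSpectrum.adicAbv_def, NumberField.HeightOneSpectrum.adicAbv_def, h]

theorem fav_finite {x : K} (hx : x ≠ 0) : {v : HeightOneSpectrum (𝓞 K) | fav v x ≠ 1}.Finite := by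
  have := FinitePlace.hasFiniteMulSupport hx
  have h2 := Set.Finite.preimage (f := fun v => FinitePlace.equivHeightOneSpectrum.symm v)
    (FinitePlace.equivHeightOneSpectrum.symm.injective.injOn) this
  refine h2.subset ?_
  intro v hv
  simp only [Set.mem_preimage, Function.mem_mulSupport]
  rw [FinitePlace.equivHeightOneSpectrum_symm_apply, FinitePlace.norm_embedding]
  exact hv

theorem fav_prod {x : K} (hx : x ≠ 0) :
    (∏ w : InfinitePlace K, w x ^ w.mult) * ∏ᶠ v : HeightOneSpectrum (𝓞 K), fav v x = 1 := by
  rw [← prod_abs_eq_one hx]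
  congr 1
  rw [← finprod_comp_equiv FinitePlace.equivHeightOneSpectrum.symm]
  refine finprod_congr fun v => ?_
  rw [FinitePlace.equivHeightOneSpectrum_symm_apply, FinitePlace.norm_embedding]

theorem fav_prod_le (T' : Finset (HeightOneSpectrum (𝓞 K))) {x : K} (hx : x ≠ 0) (hO : ∀ v ∉ T', fav v x ≤ 1) :
    1 ≤ (∏ w : InfinitePlace K, w x ^ w.mult) * ∏ v ∈ T', fav v x := by
  rw [← fav_prod hx]
  refine mul_le_mul_of_nonneg_left ?_ (Finset.prod_nonneg fun w _ => pow_nonneg (apply_nonneg w x) _)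
  set U := T' ∪ (fav_finite hx).toFinset with hU
  rw [finprod_eq_prod_of_mulSupport_subset (s := U)]
  · rw [← Finset.prod_sdiff (Finset.subset_union_left : T' ⊆ U)]
    refine mul_le_of_le_one_left (Finset.prod_nonneg fun v _ => (fav v).nonneg x) ?_
    exact Finset.prod_le_one (fun v _ => (fav v).nonneg x) fun v hv => hO v (Finset.mem_sdiff.mp hv).2
  · intro v hv
    simp only [hU, Finset.coe_union, Set.mem_union, Set.Finite.coe_toFinset]
    exact Or.inr hv

noncomputable def OO (T' : Finset (HeightOneSpectrum (𝓞 K))) : Subring K where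
  carrier := {x | ∀ v ∉ T', fav v x ≤ 1}
  mul_mem' {a b} ha hb v hv := by
    rw [map_mul]
    exact mul_le_one₀ (ha v hv) ((fav v).nonneg _) (hb v hv)
  one_mem' v _ := by rw [map_one]
  add_mem' {a b} ha hb v hv :=
    (NumberField.HeightOneSpectrum.adicAbv_add_le_max K v a b).trans (max_le (ha v hv) (hb v hv))
  zero_mem' v _ := by rw [map_zero]; exact zero_le_one
  neg_mem' {a} ha v hv := by rw [AbsoluteValue.map_neg]; exact ha v hv

noncomputable def nfSys (T T' : Finset (HeightOneSpectrum (𝓞 K))) : PlaceSys K (InfinitePlace K ⊕ T') where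
  av := Sum.elim (fun w => w.1) (fun v => fav v.1)
  e := Sum.elim (fun w => w.mult) (fun _ => 1)
  S := Finset.disjSum Finset.univ (Finset.univ.filter fun v : T' => v.1 ∈ T)
  arch := Finset.disjSum Finset.univ ∅
  O := OO T'
  arch_sub := Finset.disjSum_mono le_rfl (Finset.empty_subset _)
  arch_ne := ⟨Sum.inl (Classical.arbitrary _), by simp⟩
  e_arch := by
    rintro (w | v) h
    · simp only [Sum.elim_inl, InfinitePlace.mult]
      split_ifs <;> simp
    · simp at h
  e_fin := by
    rintro (w | v) h
    · simp at h
    · simp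
  emb := by
    rintro (w | v) h
    · refine ⟨w.embedding, fun x => ?_⟩
      exact (w.norm_embedding_eq x).symm
    · simp at h
  ultra := by
    rintro (w | v) h x y
    · simp at h
    · exact NumberField.HeightOneSpectrum.adicAbv_add_le_max K v.1 x y
  disc := by
    rintro (w | v) h x hx
    · simp at h
    · exact fav_disc v.1 x hx
  prod_le := by
    intro x hx h0
    rw [Fintype.prod_sum_type]
    simp only [Sum.elim_inl, Sum.elim_inr, pow_one]
    rw [Finset.prod_coe_sort T' (fun v => fav v x)]
    exact fav_prod_le T' h0 hx

theorem nf_bound (T : Finset (HeightOneSpectrum (𝓞 K))) (Z : Finset K) (h0 : ∀ z ∈ Z, z ≠ 0) (h1 : ∀ z ∈ Z, z ≠ 1)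
    (hc0 : ∀ v ∉ T, ∀ z ∈ Z, ∀ w ∈ Z, v.valuation K z = v.valuation K w)
    (hc1 : ∀ v ∉ T, ∀ z ∈ Z, ∀ w ∈ Z, v.valuation K (1 - z) = v.valuation K (1 - w)) :
    Z.card ≤ 3 * 7 ^ (4 * (T.card + Fintype.card (InfinitePlace K))) := by
  have hf : ∀ z ∈ Z, ({v : HeightOneSpectrum (𝓞 K) | fav v z ≠ 1} ∪ {v | fav v (1 - z) ≠ 1}).Finite := fun z hz =>
    (fav_finite (h0 z hz)).union (fav_finite (sub_ne_zero.mpr (h1 z hz).symm))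
  have hf2 : (⋃ z ∈ Z, ({v : HeightOneSpectrum (𝓞 K) | fav v z ≠ 1} ∪ {v | fav v (1 - z) ≠ 1})).Finite :=
    Set.Finite.biUnion Z.finite_toSet hf
  set T' := T ∪ hf2.toFinset with hT'
  have hout : ∀ v ∉ T', ∀ z ∈ Z, fav v z = 1 ∧ fav v (1 - z) = 1 := by
    intro v hv z hz
    by_contra hc
    refine hv (Finset.mem_union_right _ (hf2.mem_toFinset.mpr ?_))
    simp only [Set.mem_iUnion, Set.mem_union, Set.mem_ofPred_eq]
    exact ⟨z, hz, by tauto⟩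
  have hFam : (nfSys T T').Fam Z := by
    refine ⟨fun z hz => ⟨h0 z hz, h1 z hz, ?_, ?_, ?_⟩, ?_, ?_⟩
    · exact fun v hv => (hout v hv z hz).1.le
    · intro v hv
      rw [map_inv₀, (hout v hv z hz).1, inv_one]
    · intro v hv
      rw [map_inv₀, (hout v hv z hz).2, inv_one]
    · rintro (v | v) hv z hz w hw
      · simp [nfSys] at hv
      · refine fav_congr v.1 (hc0 v.1 ?_ z hz w hw)
        simpa [nfSys] using hv
    · rintro (v | v) hv z hz w hw
      · simp [nfSys] at hv
      · refine fav_congr v.1 (hc1 v.1 ?_ z hz w hw)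
        simpa [nfSys] using hv
  have hb := hFam.bound
  have hcard : (nfSys T T').S.card = T.card + Fintype.card (InfinitePlace K) := by
    simp only [nfSys, Finset.card_disjSum, Finset.card_univ]
    rw [add_comm]
    congr 1
    refine Finset.card_bij (fun v _ => v.1) (fun v hv => (Finset.mem_filter.mp hv).2)
      (fun a _ b _ h => Subtype.ext h) fun v hv => ⟨⟨v, Finset.mem_union_left _ hv⟩, ?_, rfl⟩
    simpa using hv
  rwa [hcard] at hb
end EV


namespace EV
section Loc
variable {A : Type*} [CommRing A]

theorem mono_dvd {R : Type*} [CommRing R] (p0 p1 q0 q1 : R) (i j k l : ℕ) (h : i + j = k + l) :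
    (p0 * q1 - p1 * q0) ∣ (p0 ^ i * p1 ^ j) * (q0 ^ k * q1 ^ l) - (q0 ^ i * q1 ^ j) * (p0 ^ k * p1 ^ l) := by
  rcases le_total k i with hk | hk
  · obtain ⟨n, rfl⟩ := Nat.exists_eq_add_of_le hk
    obtain rfl : l = j + n := by omega
    have h1 := sub_dvd_pow_sub_pow (p0 * q1) (p1 * q0) n
    have e : (p0 ^ (k + n) * p1 ^ j) * (q0 ^ k * q1 ^ (j + n)) - (q0 ^ (k + n) * q1 ^ j) * (p0 ^ k * p1 ^ (j + n))
      = (p0 ^ k * q0 ^ k * p1 ^ j * q1 ^ j) * ((p0 * q1) ^ n - (p1 * q0) ^ n) := by ring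
    rw [e]
    exact h1.mul_left _
  · obtain ⟨n, rfl⟩ := Nat.exists_eq_add_of_le hk
    obtain rfl : j = l + n := by omega
    have h1 := sub_dvd_pow_sub_pow (p0 * q1) (p1 * q0) n
    have e : (p0 ^ i * p1 ^ (l + n)) * (q0 ^ (i + n) * q1 ^ l) - (q0 ^ i * q1 ^ (l + n)) * (p0 ^ (i + n) * p1 ^ l)
      = - (p0 ^ i * q0 ^ i * p1 ^ l * q1 ^ l) * ((p0 * q1) ^ n - (p1 * q0) ^ n) := by ring
    rw [e]
    exact h1.mul_left _

theorem hom_sum {F : MvPolynomial (Fin 2) A} {d : ℕ} (hF : F.IsHomogeneous d) (m : Fin 2 →₀ ℕ) (hm : m ∈ F.support) :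
    m 0 + m 1 = d := by
  have := hF (mem_support_iff.mp hm)
  rw [Finsupp.weight_apply, Finsupp.sum_fintype _ _ (by simp)] at this
  simpa [Fin.sum_univ_two] using this

theorem form_dvd {R : Type*} [CommRing R] (f : A →+* R) {F G : MvPolynomial (Fin 2) A} {d : ℕ} (hF : F.IsHomogeneous d)
    (hG : G.IsHomogeneous d) (p q : Fin 2 → R) :
    (p 0 * q 1 - p 1 * q 0) ∣ eval₂ f p F * eval₂ f q G - eval₂ f q F * eval₂ f p G := by
  simp only [eval₂_eq', Finset.sum_mul_sum, Fin.prod_univ_two]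
  rw [← Finset.sum_sub_distrib]
  refine Finset.dvd_sum fun m hm => ?_
  rw [← Finset.sum_sub_distrib]
  refine Finset.dvd_sum fun m' hm' => ?_
  have e : m 0 + m 1 = m' 0 + m' 1 := (hom_sum hF m hm).trans (hom_sum hG m' hm').symm
  have := (mono_dvd (p 0) (p 1) (q 0) (q 1) _ _ _ _ e).mul_left (f (F.coeff m) * f (G.coeff m'))
  convert this using 1
  ring

theorem exists_E {F G : MvPolynomial (Fin 2) A} {d : ℕ} (hF : F.IsHomogeneous d) (hG : G.IsHomogeneous d) :
    ∃ E : MvPolynomial (Fin 2 ⊕ Fin 2) A, ∀ (R : Type _) [CommRing R] (f : A →+* R) (p q : Fin 2 → R),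
      eval₂ f p F * eval₂ f q G - eval₂ f q F * eval₂ f p G =
        (p 0 * q 1 - p 1 * q 0) * eval₂ f (Sum.elim p q) E := by
  obtain ⟨E, hE⟩ := form_dvd (C : A →+* MvPolynomial (Fin 2 ⊕ Fin 2) A) hF hG (fun i => X (Sum.inl i)) (fun i => X (Sum.inr i))
  refine ⟨E, fun R _ f p q => ?_⟩
  have h := congrArg (eval₂Hom f (Sum.elim p q)) hE
  simp only [map_sub, map_mul, coe_eval₂Hom, eval₂_X, Sum.elim_inl, Sum.elim_inr] at h
  rw [← h]
  have key : ∀ (H : MvPolynomial (Fin 2) A) (g : Fin 2 → Fin 2 ⊕ Fin 2),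
      eval₂ f (Sum.elim p q) (eval₂ C (fun i => X (g i)) H) = eval₂ f (fun i => Sum.elim p q (g i)) H := by
    intro H g
    have := hom_eval₂ H (C : A →+* MvPolynomial (Fin 2 ⊕ Fin 2) A) (eval₂Hom f (Sum.elim p q)) (fun i => X (g i))
    simp only [coe_eval₂Hom, eval₂_X] at this
    rw [this]
    congr 1
    ext a; simp
  rw [key, key, key, key]
  rfl

/-- the lift of the map to the plane -/
noncomputable def Phi (F G : MvPolynomial (Fin 2) A) (p : Fin 2 → A) : Fin 2 → A := ![eval p F, eval p G]

def Del (p q : Fin 2 → A) : A := p 0 * q 1 - p 1 * q 0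

theorem eval_smul_hom {F : MvPolynomial (Fin 2) A} {d : ℕ} (hF : F.IsHomogeneous d) (u : A) (p : Fin 2 → A) :
    eval (u • p) F = u ^ d * eval p F := by
  rw [eval_eq', eval_eq', Finset.mul_sum]
  refine Finset.sum_congr rfl fun m hm => ?_
  rw [← hom_sum hF m hm]
  simp only [Fin.prod_univ_two, Pi.smul_apply, smul_eq_mul]
  ring

variable {F G : MvPolynomial (Fin 2) A} {d : ℕ}

theorem Phi_smul (hF : F.IsHomogeneous d) (hG : G.IsHomogeneous d) (u : A) (p : Fin 2 → A) :
    Phi F G (u • p) = u ^ d • Phi F G p := by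
  unfold Phi
  rw [eval_smul_hom hF, eval_smul_hom hG]
  ext i; fin_cases i <;> simp

theorem Phi_iter_smul (hF : F.IsHomogeneous d) (hG : G.IsHomogeneous d) (n : ℕ) (u : A) (p : Fin 2 → A) :
    (Phi F G)^[n] (u • p) = u ^ (d ^ n) • (Phi F G)^[n] p := by
  induction n with
  | zero => simp
  | succ n ih =>
    rw [Function.iterate_succ_apply', Function.iterate_succ_apply', ih, Phi_smul hF hG, ← pow_mul, pow_succ]

theorem Del_smul (u w : A) (p q : Fin 2 → A) : Del (u • p) (w • q) = u * w * Del p q := by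
  simp only [Del, Pi.smul_apply, smul_eq_mul]; ring

theorem Del_self (p : Fin 2 → A) : Del p p = 0 := by unfold Del; ring

/-- Property of the quotient form. -/
def IsE (F G : MvPolynomial (Fin 2) A) (E : MvPolynomial (Fin 2 ⊕ Fin 2) A) : Prop :=
  ∀ p q : Fin 2 → A, Del (Phi F G p) (Phi F G q) = Del p q * eval (Sum.elim p q) E

theorem Del_iter {E : MvPolynomial (Fin 2 ⊕ Fin 2) A} (hE : IsE F G E) (n : ℕ) (p q : Fin 2 → A) :
    Del ((Phi F G)^[n] p) ((Phi F G)^[n] q) =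
      Del p q * ∏ k ∈ Finset.range n, eval (Sum.elim ((Phi F G)^[k] p) ((Phi F G)^[k] q)) E := by
  induction n with
  | zero => simp
  | succ n ih =>
    rw [Function.iterate_succ_apply', Function.iterate_succ_apply', hE, ih, Finset.prod_range_succ, mul_assoc]

/-- congruence along a ring hom -/
def Cg {B : Type*} [CommRing B] (f : A →+* B) (p q : Fin 2 → A) : Prop := ∀ i, f (p i) = f (q i)

variable {B : Type*} [CommRing B] (f : A →+* B)

theorem Cg.eval {p q : Fin 2 → A} (h : Cg f p q) (H : MvPolynomial (Fin 2) A) : f (eval p H) = f (eval q H) := by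
  rw [eval₂_comp, eval₂_comp]
  congr 1
  ext i; exact h i

theorem Cg.Phi {p q : Fin 2 → A} (h : Cg f p q) : Cg f (Phi F G p) (Phi F G q) := by
  intro i
  fin_cases i
  · exact h.eval f F
  · exact h.eval f G

theorem Cg.iter {p q : Fin 2 → A} (h : Cg f p q) (n : ℕ) : Cg f ((EV.Phi F G)^[n] p) ((EV.Phi F G)^[n] q) := by
  induction n with
  | zero => exact h
  | succ n ih =>
    rw [Function.iterate_succ_apply', Function.iterate_succ_apply']
    exact ih.Phi f

theorem Cg.evalE {p q p' q' : Fin 2 → A} (h : Cg f p p') (h' : Cg f q q') (E : MvPolynomial (Fin 2 ⊕ Fin 2) A) :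
    f (MvPolynomial.eval (Sum.elim p q) E) = f (MvPolynomial.eval (Sum.elim p' q') E) := by
  rw [eval₂_comp, eval₂_comp]
  congr 1
  ext i
  rcases i with i | i
  · exact h i
  · exact h' i

end Loc

section Loc2
variable {A : Type*} [CommRing A] [IsDomain A] [IsLocalRing A] {F G : MvPolynomial (Fin 2) A} {d : ℕ}

def Prim (p : Fin 2 → A) : Prop := IsUnit (p 0) ∨ IsUnit (p 1)

theorem unit_congr {x y : A} (h : IsLocalRing.residue A x = IsLocalRing.residue A y) (hx : IsUnit x) : IsUnit y := by
  rw [← IsLocalRing.residue_ne_zero_iff_isUnit] at hx ⊢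
  rwa [← h]

theorem exists_scale {p r : Fin 2 → A} (hp : Prim p) (hr : Prim r) (h : ¬ IsUnit (Del p r)) :
    ∃ t : A, IsUnit t ∧ Cg (IsLocalRing.residue A) (t • r) p := by
  have h0 : IsLocalRing.residue A (Del p r) = 0 := by
    by_contra hc
    exact h ((IsLocalRing.residue_ne_zero_iff_isUnit _).mp hc)
  unfold Del at h0
  simp only [map_sub, map_mul] at h0
  simp only [Prim, ← IsLocalRing.residue_ne_zero_iff_isUnit] at hp hr
  have aux : ∀ i j : Fin 2, IsLocalRing.residue A (r i) ≠ 0 → (∀ k, k = i ∨ k = j) →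
      IsLocalRing.residue A (p i) * IsLocalRing.residue A (r j) = IsLocalRing.residue A (p j) * IsLocalRing.residue A (r i) →
      ∃ t : A, IsUnit t ∧ Cg (IsLocalRing.residue A) (t • r) p := by
    intro i j hi hk he
    obtain ⟨t, ht⟩ := IsLocalRing.residue_surjective (IsLocalRing.residue A (p i) / IsLocalRing.residue A (r i))
    have hcg : Cg (IsLocalRing.residue A) (t • r) p := by
      intro k
      simp only [Pi.smul_apply, smul_eq_mul, map_mul]
      rw [ht]
      rcases hk k with rfl | rfl
      · field_simp
      · field_simp
        rw [he, mul_comm]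
    refine ⟨t, ?_, hcg⟩
    rw [← IsLocalRing.residue_ne_zero_iff_isUnit]
    intro h0
    have hz : ∀ k, IsLocalRing.residue A (p k) = 0 := by
      intro k
      rw [← hcg k]
      simp only [Pi.smul_apply, smul_eq_mul, map_mul, h0, zero_mul]
    rcases hp with hp | hp <;> exact hp (hz _)
  rcases hr with hr | hr
  · exact aux 0 1 hr (by decide) (by linear_combination h0)
  · exact aux 1 0 hr (by decide) (by linear_combination - h0)

theorem local_core (hF : F.IsHomogeneous d) (hG : G.IsHomogeneous d) {E : MvPolynomial (Fin 2 ⊕ Fin 2) A}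
    (hE : IsE F G E) (N : ℕ) (p r : Fin 2 → A) (hp : Prim p) (hr : Prim r) (u u' : A) (hu : IsUnit u) (hu' : IsUnit u')
    (hpN : (Phi F G)^[N] p = u • p) (hq : (Phi F G)^[N] ((Phi F G)^[N] r) = u' • (Phi F G)^[N] r)
    (hne : Del p ((Phi F G)^[N] r) ≠ 0)
    (hcase : Del r ((Phi F G)^[N] r) ≠ 0 ∨ ∃ k < N, ∀ t : A, IsUnit t →
      eval (Sum.elim ((Phi F G)^[k] (t • r)) ((Phi F G)^[k] (t • r))) E = 0) :
    IsUnit (Del p r) := by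
  by_contra hcon
  obtain ⟨t, ht, hcg⟩ := exists_scale hp hr hcon
  obtain ⟨w, hw⟩ := hu.exists_left_inv
  have hwu : IsUnit w := IsUnit.of_mul_eq_one u hw
  set s := w * t ^ (d ^ N) with hs
  have hsu : IsUnit s := hwu.mul (ht.pow _)
  set q := s • (Phi F G)^[N] r with hqdef
  have hrN : (Phi F G)^[N] (t • r) = u • q := by
    rw [Phi_iter_smul hF hG, hqdef, smul_smul, hs, ← mul_assoc, mul_comm u w, hw, one_mul]
  have hcq : Cg (IsLocalRing.residue A) q p := by
    have h1 := hcg.iter (F := F) (G := G) _ N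
    rw [hrN, hpN] at h1
    intro i
    have h2 := h1 i
    simp only [Pi.smul_apply, smul_eq_mul, map_mul] at h2
    exact mul_left_cancel₀ ((IsLocalRing.residue_ne_zero_iff_isUnit _).mpr hu) h2
  obtain ⟨y, hyu, hqN⟩ : ∃ y : A, IsUnit y ∧ (Phi F G)^[N] q = y • q := by
    obtain ⟨s', hs'⟩ := hsu.exists_left_inv
    refine ⟨s ^ (d ^ N) * u' * s', ((hsu.pow _).mul hu').mul (IsUnit.of_mul_eq_one s hs'), ?_⟩
    rw [hqdef, Phi_iter_smul hF hG, hq, smul_smul, smul_smul, mul_assoc _ s' s, hs', mul_one]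
  have hprod : IsUnit (∏ k ∈ Finset.range N, eval (Sum.elim ((Phi F G)^[k] p) ((Phi F G)^[k] q)) E) := by
    have h1 := Del_iter hE N p q
    rw [hpN, hqN, Del_smul] at h1
    have h2 : Del p q ≠ 0 := by
      have : Del p q = 1 * s * Del p ((Phi F G)^[N] r) := by
        rw [hqdef, ← Del_smul, one_smul]
      rw [this, one_mul]
      exact mul_ne_zero hsu.ne_zero hne
    have h3 := mul_left_cancel₀ h2 (h1.symm.trans (mul_comm _ _))
    rw [h3]
    exact hu.mul hyu
  rcases hcase with hcase | ⟨k, hk, hcrit⟩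
  · have h1 := Del_iter hE N (t • r) q
    rw [hrN, hqN, Del_smul, Del_self, mul_zero] at h1
    have h2 : IsUnit (∏ k ∈ Finset.range N, eval (Sum.elim ((Phi F G)^[k] (t • r)) ((Phi F G)^[k] q)) E) := by
      refine unit_congr ?_ hprod
      rw [map_prod, map_prod]
      refine Finset.prod_congr rfl fun k _ => ?_
      exact Cg.evalE _ (fun i => (hcg.iter _ k i).symm) (fun i => rfl) E
    rcases mul_eq_zero.mp h1.symm with h3 | h3
    · rw [hqdef, Del_smul] at h3
      exact mul_ne_zero (mul_ne_zero ht.ne_zero hsu.ne_zero) hcase h3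
    · exact h2.ne_zero h3
  · have h1 := isUnit_of_dvd_unit (Finset.dvd_prod_of_mem _ (Finset.mem_range.mpr hk)) hprod
    have h2 : IsUnit (eval (Sum.elim ((Phi F G)^[k] (t • r)) ((Phi F G)^[k] (t • r))) E) := by
      refine unit_congr ?_ h1
      refine Cg.evalE _ (fun i => (hcg.iter _ k i).symm) (fun i => ?_) E
      rw [hcq.iter _ k i, hcg.iter _ k i]
    exact h2.ne_zero (hcrit t ht)

end Loc2
end EV


namespace EV
section KL
variable {K : Type*} [Field K] (A : ValuationSubring K)

def Rp (p : Fin 2 → A) (P : P1 K) : Prop :=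
  ∃ h : (fun i => (p i : K)) ≠ 0, P = Projectivization.mk K (fun i => (p i : K)) h

variable {A}

theorem Prim.ne_zero {p : Fin 2 → A} (hp : Prim p) : (fun i => (p i : K)) ≠ 0 := by
  intro h
  rcases hp with hp | hp
  · exact hp.ne_zero (Subtype.ext (congrFun h 0))
  · exact hp.ne_zero (Subtype.ext (congrFun h 1))

theorem exists_prim (A : ValuationSubring K) (x : Fin 2 → K) (hx : x ≠ 0) :
    ∃ l : K, l ≠ 0 ∧ ∃ p : Fin 2 → A, Prim p ∧ ∀ i, (p i : K) = l * x i := by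
  by_cases h0 : x 0 = 0
  · have h1 : x 1 ≠ 0 := by
      intro h1
      apply hx
      ext i; fin_cases i
      · exact h0
      · exact h1
    refine ⟨(x 1)⁻¹, inv_ne_zero h1, ![0, 1], Or.inr (by simp), ?_⟩
    intro i; fin_cases i
    · simp [h0]
    · simp [h1]
  · rcases A.mem_or_inv_mem (x 1 / x 0) with h | h
    · refine ⟨(x 0)⁻¹, inv_ne_zero h0, ![1, ⟨_, h⟩], Or.inl (by simp), ?_⟩
      intro i; fin_cases i
      · simp [h0]
      · simp; field_simp
    · by_cases h1 : x 1 = 0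
      · refine ⟨(x 0)⁻¹, inv_ne_zero h0, ![1, 0], Or.inl (by simp), ?_⟩
        intro i; fin_cases i
        · simp [h0]
        · simp [h1]
      · refine ⟨(x 1)⁻¹, inv_ne_zero h1, ![⟨_, h⟩, 1], Or.inr (by simp), ?_⟩
        intro i; fin_cases i
        · simp; field_simp
        · simp [h1]

theorem exists_rp (A : ValuationSubring K) (P : P1 K) : ∃ p : Fin 2 → A, Prim p ∧ Rp A p P := by
  obtain ⟨l, hl, p, hp, h⟩ := exists_prim A P.rep P.rep_nonzero
  refine ⟨p, hp, hp.ne_zero, ?_⟩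
  conv_lhs => rw [← P.mk_rep]
  rw [Projectivization.mk_eq_mk_iff']
  refine ⟨l⁻¹, ?_⟩
  ext i
  simp only [Pi.smul_apply, smul_eq_mul, h]
  field_simp

theorem Rp.smul {p : Fin 2 → A} {P : P1 K} (h : Rp A p P) {u : A} (hu : IsUnit u) : Rp A (u • p) P := by
  obtain ⟨h0, h1⟩ := h
  have hu0 : (u : K) ≠ 0 := fun h => hu.ne_zero (Subtype.ext h)
  have e : (fun i => ((u • p) i : K)) = (u : K) • (fun i => (p i : K)) := by
    ext i; simp
  refine ⟨by rw [e]; exact smul_ne_zero hu0 h0, ?_⟩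
  rw [h1, Projectivization.mk_eq_mk_iff']
  refine ⟨(u : K)⁻¹, ?_⟩
  rw [e, smul_smul, inv_mul_cancel₀ hu0, one_smul]

theorem Prim.smul {p : Fin 2 → A} (h : Prim p) {u : A} (hu : IsUnit u) : Prim (u • p) :=
  h.imp (fun h => hu.mul h) (fun h => hu.mul h)

theorem Prim.scal_mem {p q : Fin 2 → A} (hp : Prim p) (a : K) (h : ∀ i, (q i : K) = a * p i) : a ∈ A := by
  have aux : ∀ i, IsUnit (p i) → a ∈ A := by
    intro i hi
    obtain ⟨w, hw⟩ := hi.exists_left_inv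
    have : a = ((w * q i : A) : K) := by
      have h2 : (w : K) * p i = 1 := by exact_mod_cast congrArg (fun x : A => (x : K)) hw
      push_cast
      rw [h]
      linear_combination - a * h2
    rw [this]
    exact Subtype.property _
  rcases hp with hp | hp
  · exact aux 0 hp
  · exact aux 1 hp

theorem Rp.unique {p q : Fin 2 → A} {P : P1 K} (hp : Prim p) (hq : Prim q) (h : Rp A p P) (h' : Rp A q P) :
    ∃ u : A, IsUnit u ∧ q = u • p := by
  obtain ⟨h0, h1⟩ := h
  obtain ⟨h0', h1'⟩ := h'
  rw [h1', Projectivization.mk_eq_mk_iff'] at h1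
  obtain ⟨a, ha⟩ := h1
  have hai : ∀ i, (q i : K) = a * p i := fun i => (congrFun ha i).symm
  have ha0 : a ≠ 0 := by
    rintro rfl
    rw [zero_smul] at ha
    exact h0' ha.symm
  have hb : ∀ i, (p i : K) = a⁻¹ * q i := fun i => by rw [hai]; field_simp
  refine ⟨⟨a, hp.scal_mem a hai⟩, ?_, ?_⟩
  · refine IsUnit.of_mul_eq_one ⟨a⁻¹, hq.scal_mem _ hb⟩ ?_
    ext
    simp [ha0]
  · ext i
    simp [hai]

theorem del_iff {x y : Fin 2 → K} (hx : x ≠ 0) (hy : y ≠ 0) :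
    x 0 * y 1 - x 1 * y 0 = 0 ↔ Projectivization.mk K x hx = Projectivization.mk K y hy := by
  rw [Projectivization.mk_eq_mk_iff']
  constructor
  · intro h
    have aux : ∀ i j : Fin 2, y i ≠ 0 → (∀ k, k = i ∨ k = j) → x i * y j = x j * y i → ∃ a : K, a • y = x := by
      intro i j hi hk he
      refine ⟨x i / y i, ?_⟩
      ext k
      simp only [Pi.smul_apply, smul_eq_mul]
      rcases hk k with rfl | rfl
      · field_simp
      · field_simp
        rw [he, mul_comm]
    by_cases h0 : y 0 = 0
    · have h1 : y 1 ≠ 0 := by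
        intro h1
        apply hy
        ext i; fin_cases i
        · exact h0
        · exact h1
      exact aux 1 0 h1 (by decide) (by linear_combination - h)
    · exact aux 0 1 h0 (by decide) (by linear_combination h)
  · rintro ⟨a, rfl⟩
    simp only [Pi.smul_apply, smul_eq_mul]
    ring

theorem Rp.del {p q : Fin 2 → A} {P Q : P1 K} (h : Rp A p P) (h' : Rp A q Q) : Del p q = 0 ↔ P = Q := by
  obtain ⟨h0, rfl⟩ := h
  obtain ⟨h0', rfl⟩ := h'
  rw [← del_iff h0 h0', ← Subtype.coe_inj]
  simp only [Del]
  push_cast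
  rfl

variable {d : ℕ} {φ : P1Map K d} {c : K} {F₀ G₀ : MvPolynomial (Fin 2) A}

theorem eval_coe {H : MvPolynomial (Fin 2) K} {H₀ : MvPolynomial (Fin 2) A}
    (hH : MvPolynomial.map A.subtype H₀ = C c * H) (p : Fin 2 → A) :
    ((eval p H₀ : A) : K) = c * eval (fun i => (p i : K)) H := by
  have h1 := eval₂_comp A.subtype p H₀
  rw [← eval_map, hH] at h1
  simpa [Function.comp_def] using h1

theorem hom_of {H : MvPolynomial (Fin 2) K} {H₀ : MvPolynomial (Fin 2) A}
    (hH : MvPolynomial.map A.subtype H₀ = C c * H) (h : H.IsHomogeneous d) : H₀.IsHomogeneous d := by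
  refine IsHomogeneous.of_map (f := A.subtype) Subtype.val_injective ?_
  rw [hH]
  simpa using (isHomogeneous_C (Fin 2) c).mul h

theorem prim_Phi (hgood : ∀ x y : AlgebraicClosure (IsLocalRing.ResidueField A),
        eval ![x, y] (MvPolynomial.map ((algebraMap (IsLocalRing.ResidueField A) (AlgebraicClosure _)).comp
            (IsLocalRing.residue _)) F₀) = 0 →
        eval ![x, y] (MvPolynomial.map ((algebraMap (IsLocalRing.ResidueField A) (AlgebraicClosure _)).comp
            (IsLocalRing.residue _)) G₀) = 0 → x = 0 ∧ y = 0) {p : Fin 2 → A} (hp : Prim p) : Prim (Phi F₀ G₀ p) := by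
  by_contra hcon
  simp only [Prim, Phi, ← IsLocalRing.residue_ne_zero_iff_isUnit, not_or, not_not, Matrix.cons_val_zero, Matrix.cons_val_one] at hcon hp
  set g := (algebraMap (IsLocalRing.ResidueField A) (AlgebraicClosure (IsLocalRing.ResidueField A))).comp
            (IsLocalRing.residue A) with hg
  have key : ∀ H : MvPolynomial (Fin 2) A, IsLocalRing.residue A (eval p H) = 0 →
      eval ![g (p 0), g (p 1)] (MvPolynomial.map g H) = 0 := by
    intro H h
    have h1 := eval₂_comp g p H
    have h2 : g (eval p H) = 0 := by rw [hg, RingHom.comp_apply, h, map_zero]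
    rw [h2] at h1
    rw [eval_map]
    rw [h1]
    congr 1
    ext i; fin_cases i <;> rfl
  obtain ⟨h1, h2⟩ := hgood (g (p 0)) (g (p 1)) (key F₀ hcon.1) (key G₀ hcon.2)
  simp only [hg, RingHom.comp_apply, map_eq_zero] at h1 h2
  rcases hp with hp | hp
  · exact hp h1
  · exact hp h2

theorem rp_Phi (hc : c ≠ 0) (hF : MvPolynomial.map A.subtype F₀ = C c * φ.F) (hG : MvPolynomial.map A.subtype G₀ = C c * φ.G)
    {p : Fin 2 → A} {P : P1 K} (hP : Rp A p P) (hp : Prim (Phi F₀ G₀ p)) : Rp A (Phi F₀ G₀ p) (φ.toFun P) := by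
  obtain ⟨h0, rfl⟩ := hP
  have e0 : (fun i => (p i : K)) = ![(p 0 : K), (p 1 : K)] := by
    ext i; fin_cases i <;> rfl
  have e : (fun i => ((Phi F₀ G₀ p i : A) : K)) = c • ![eval ![(p 0 : K), (p 1 : K)] φ.F, eval ![(p 0 : K), (p 1 : K)] φ.G] := by
    rw [← e0]
    ext i; fin_cases i
    · simp [Phi, eval_coe hF]
    · simp [Phi, eval_coe hG]
  have hne : ![eval ![(p 0 : K), (p 1 : K)] φ.F, eval ![(p 0 : K), (p 1 : K)] φ.G] ≠ 0 := by
    intro h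
    rw [h, smul_zero] at e
    exact hp.ne_zero e
  refine ⟨hp.ne_zero, ?_⟩
  simp only [e0]
  rw [φ.compat _ _ (by rw [← e0]; exact h0) hne, Projectivization.mk_eq_mk_iff']
  refine ⟨c⁻¹, ?_⟩
  rw [e, smul_smul, inv_mul_cancel₀ hc, one_smul]

theorem crit_zero (hc : c ≠ 0) (hF : MvPolynomial.map A.subtype F₀ = C c * φ.F) (hG : MvPolynomial.map A.subtype G₀ = C c * φ.G)
    {E : MvPolynomial (Fin 2 ⊕ Fin 2) A}
    (hE : ∀ (f : A →+* MvPolynomial (Fin 2) K) (p q : Fin 2 → MvPolynomial (Fin 2) K),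
      eval₂ f p F₀ * eval₂ f q G₀ - eval₂ f q F₀ * eval₂ f p G₀ =
        (p 0 * q 1 - p 1 * q 0) * eval₂ f (Sum.elim p q) E)
    {r : Fin 2 → A} {R : P1 K} (hr : Rp A r R) (hR : IsCriticalPt φ R) : eval (Sum.elim r r) E = 0 := by
  obtain ⟨a, b, hab, hRab, hdvd⟩ := hR
  obtain ⟨h0, h1⟩ := hr
  rw [hRab, eq_comm, Projectivization.mk_eq_mk_iff'] at h1
  obtain ⟨l, hl⟩ := h1
  have hr0 : (r 0 : K) = l * a := (congrFun hl 0).symm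
  have hr1 : (r 1 : K) = l * b := (congrFun hl 1).symm
  have hl0 : l ≠ 0 := by
    rintro rfl
    rw [zero_smul] at hl
    exact h0 hl.symm
  set f : A →+* MvPolynomial (Fin 2) K := C.comp A.subtype with hf
  have h := hE f X (fun i => C (r i : K))
  have eX : ∀ H : MvPolynomial (Fin 2) A, eval₂ f X H = MvPolynomial.map A.subtype H := by
    intro H
    induction H using MvPolynomial.induction_on with
    | C a => simp [hf]
    | add p q hp hq => rw [eval₂_add, hp, hq, map_add]
    | mul_X p i hp => rw [eval₂_mul, hp, eval₂_X, map_mul, map_X]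
  have eC : ∀ H : MvPolynomial (Fin 2) A, eval₂ f (fun i => C (r i : K)) H = C ((eval r H : A) : K) := by
    intro H
    have := eval₂_comp f r H
    exact this.symm
  have eh : ∀ {H : MvPolynomial (Fin 2) K}, H.IsHomogeneous d → eval (fun i => (r i : K)) H = l ^ d * eval ![a, b] H := by
    intro H hH
    rw [← hl, eval_smul_hom hH]
  rw [eX, eX, eC, eC, hF, hG, eval_coe hF, eval_coe hG, eh φ.homF, eh φ.homG] at h
  set L : MvPolynomial (Fin 2) K := C b * X 0 - C a * X 1 with hL
  set E' := eval₂ f (Sum.elim X fun i => C (r i : K)) E with hE'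
  have e2 : X 0 * C (r 1 : K) - X 1 * C (r 0 : K) = C l * L := by
    rw [hr0, hr1, hL]
    simp only [map_mul]
    ring
  simp only [e2] at h
  have h3 : L ^ 2 ∣ C l * L * E' := by
    rw [← h]
    have : C c * φ.F * C (c * (l ^ d * eval ![a, b] φ.G)) - C (c * (l ^ d * eval ![a, b] φ.F)) * (C c * φ.G)
      = C (c * c * l ^ d) * (C (eval ![a, b] φ.G) * φ.F - C (eval ![a, b] φ.F) * φ.G) := by
      simp only [map_mul]
      ring
    rw [this]
    exact hdvd.mul_left _
  have hLne : L ≠ 0 := by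
    intro hz
    apply hab
    have z1 := congrArg (eval ![1, 0]) hz
    have z2 := congrArg (eval ![0, 1]) hz
    simp [hL] at z1 z2
    rw [z1, z2]
    ext i; fin_cases i <;> rfl
  have h4 : L ∣ C l * E' := by
    have : C l * L * E' = L * (C l * E') := by ring
    rw [this, sq] at h3
    exact (mul_dvd_mul_iff_left hLne).mp h3
  obtain ⟨M, hM⟩ := h4
  have h5 := congrArg (eval (fun i => (r i : K))) hM
  simp only [map_mul, eval_C] at h5
  have h6 : eval (fun i => (r i : K)) L = 0 := by
    simp only [hL, map_sub, map_mul, eval_C, eval_X, hr0, hr1]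
    ring
  rw [h6, zero_mul] at h5
  have h7 := (mul_eq_zero.mp h5).resolve_left hl0
  have h8 : eval (fun i => (r i : K)) E' = ((eval (Sum.elim r r) E : A) : K) := by
    have h9 := eval₂_comp A.subtype (Sum.elim r r) E
    refine Eq.trans ?_ h9.symm
    rw [hE', hom_eval₂]
    congr 1
    · ext x; simp [hf]
    · ext i
      rcases i with i | i <;> simp
  rw [h8] at h7
  exact Subtype.ext h7

theorem local_unit (hc : c ≠ 0) (hF : MvPolynomial.map A.subtype F₀ = C c * φ.F) (hG : MvPolynomial.map A.subtype G₀ = C c * φ.G)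
    (hgood : ∀ x y : AlgebraicClosure (IsLocalRing.ResidueField A),
        eval ![x, y] (MvPolynomial.map ((algebraMap (IsLocalRing.ResidueField A) (AlgebraicClosure _)).comp
            (IsLocalRing.residue _)) F₀) = 0 →
        eval ![x, y] (MvPolynomial.map ((algebraMap (IsLocalRing.ResidueField A) (AlgebraicClosure _)).comp
            (IsLocalRing.residue _)) G₀) = 0 → x = 0 ∧ y = 0)
    {P R Q : P1 K} {n1 n0 : ℕ} (hn1 : 0 < n1) (hn0 : 0 < n0) (hP : φ.toFun^[n1] P = P) (hR : φ.toFun^[n0] R = Q)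
    (hQ : φ.toFun^[n0] Q = Q) (hPQ : P ≠ Q) (hcase : R ≠ Q ∨ ∃ k, IsCriticalPt φ (φ.toFun^[k] R))
    {p r : Fin 2 → A} (hp : Prim p) (hr : Prim r) (hpP : Rp A p P) (hrR : Rp A r R) : IsUnit (Del p r) := by
  have homF := hom_of hF φ.homF
  have homG := hom_of hG φ.homG
  obtain ⟨E, hE⟩ := exists_E homF homG
  have hIsE : IsE F₀ G₀ E := by
    intro p q
    have := hE A (RingHom.id A) p q
    simp only [Del, Phi, Matrix.cons_val_zero, Matrix.cons_val_one]
    rw [← sub_eq_zero]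
    have h2 := sub_eq_zero.mpr this
    simp only [eval₂_id] at h2
    linear_combination h2
  have iter : ∀ n (p : Fin 2 → A) (P : P1 K), Prim p → Rp A p P →
      Prim ((Phi F₀ G₀)^[n] p) ∧ Rp A ((Phi F₀ G₀)^[n] p) (φ.toFun^[n] P) := by
    intro n p P hp hP
    induction n with
    | zero => exact ⟨hp, hP⟩
    | succ n ih =>
      rw [Function.iterate_succ_apply', Function.iterate_succ_apply']
      have := prim_Phi hgood ih.1
      exact ⟨this, rp_Phi hc hF hG ih.2 this⟩
  obtain ⟨k, hk⟩ : ∃ k, R ≠ Q ∨ IsCriticalPt φ (φ.toFun^[k] R) := by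
    rcases hcase with h | ⟨k, hk⟩
    · exact ⟨0, Or.inl h⟩
    · exact ⟨k, Or.inr hk⟩
  set N := n0 * n1 * (k + 1) with hN
  have hNk : k < N := by
    have : 1 ≤ n0 * n1 := Nat.mul_pos hn0 hn1
    nlinarith
  have hPN : φ.toFun^[N] P = P := by
    have : N = n1 * (n0 * (k + 1)) := by rw [hN]; ring
    rw [this, Function.iterate_mul]
    exact Function.iterate_fixed hP _
  have hQN : φ.toFun^[N] Q = Q := by
    have : N = n0 * (n1 * (k + 1)) := by rw [hN]; ring
    rw [this, Function.iterate_mul]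
    exact Function.iterate_fixed hQ _
  have hRN : φ.toFun^[N] R = Q := by
    obtain ⟨j, hj⟩ : ∃ j, n1 * (k + 1) = j + 1 := Nat.exists_eq_succ_of_ne_zero (by positivity)
    have : N = n0 * (j + 1) := by rw [← hj, hN]; ring
    rw [this, Function.iterate_mul, Function.iterate_succ_apply, hR]
    exact Function.iterate_fixed hQ _
  obtain ⟨pN1, pN2⟩ := iter N p P hp hpP
  rw [hPN] at pN2
  obtain ⟨u, hu, hpN⟩ := hpP.unique hp pN1 pN2
  obtain ⟨rN1, rN2⟩ := iter N r R hr hrR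
  rw [hRN] at rN2
  obtain ⟨qN1, qN2⟩ := iter N _ Q rN1 rN2
  rw [hQN] at qN2
  obtain ⟨u', hu', hqN⟩ := rN2.unique rN1 qN1 qN2
  refine local_core homF homG hIsE N p r hp hr u u' hu hu' hpN hqN (fun h => hPQ ((hpP.del rN2).mp h)) ?_
  rcases hk with hk | hk
  · exact Or.inl fun h => hk ((hrR.del rN2).mp h)
  · refine Or.inr ⟨k, hNk, fun t ht => ?_⟩
    exact crit_zero hc hF hG (hE (MvPolynomial (Fin 2) K)) (iter k _ R (hr.smul ht) (hrR.smul ht)).2 hk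
end KL
end EV


namespace EV
section Fin
variable {K : Type*} [Field K] [NumberField K] {d : ℕ} {φ : P1Map K d}

theorem per_mul {f : P1 K → P1 K} {n : ℕ} {P : P1 K} (h : f^[n] P = P) (j : ℕ) : f^[n * j] P = P := by
  rw [Function.iterate_mul]
  exact Function.iterate_fixed h _

/-- The common shape of the special points. -/
def Spec (φ : P1Map K d) (R Q : P1 K) : Prop :=
  ∃ n0, 0 < n0 ∧ φ.toFun^[n0] R = Q ∧ φ.toFun^[n0] Q = Q ∧ (R ≠ Q ∨ ∃ k, IsCriticalPt φ (φ.toFun^[k] R))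

theorem exists_spec {R : P1 K} (h : IsTailPoint φ R ∨ InCriticalCycle φ R) : ∃ Q, Spec φ R Q := by
  rcases h with ⟨⟨m, l, hl, hm⟩, hnp⟩ | ⟨Q, hQc, ⟨l, hl, hQ⟩, n, hn⟩
  · refine ⟨φ.toFun^[l * (m + 1)] R, l * (m + 1), by positivity, rfl, ?_, Or.inl fun h => hnp ?_⟩
    · have hge : m ≤ l * (m + 1) := by nlinarith
      obtain ⟨j, hj⟩ := Nat.exists_eq_add_of_le hge
      have e : φ.toFun^[l * (m + 1)] R = φ.toFun^[j] (φ.toFun^[m] R) := by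
        rw [hj, add_comm, Function.iterate_add_apply]
      rw [e, ← Function.iterate_add_apply, add_comm, Function.iterate_add_apply, per_mul hm]
    · exact ⟨l * (m + 1), by positivity, h.symm⟩
  · refine ⟨R, l, hl, ?_, ?_, Or.inr ⟨l * n - n, ?_⟩⟩
    · rw [← hn, ← Function.iterate_add_apply, add_comm, Function.iterate_add_apply, hQ]
    · rw [← hn, ← Function.iterate_add_apply, add_comm, Function.iterate_add_apply, hQ]
    · have : n ≤ l * n := Nat.le_mul_of_pos_left n hl
      rw [← hn, ← Function.iterate_add_apply, Nat.sub_add_cancel this, per_mul hQ]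
      exact hQc

theorem Spec.ne {R Q P : P1 K} (h : Spec φ R Q) (hP : IsPeriodicPoint φ P) (hPQ : P ≠ Q) : P ≠ R := by
  rintro rfl
  obtain ⟨n0, hn0, hR, hQ, -⟩ := h
  obtain ⟨n1, hn1, hP⟩ := hP
  apply hPQ
  obtain ⟨j, rfl⟩ := Nat.exists_eq_succ_of_ne_zero hn1.ne'
  have h1 := per_mul hP n0
  rw [mul_comm, Function.iterate_mul, Function.iterate_succ_apply, hR, Function.iterate_fixed hQ] at h1
  exact h1.symm

theorem Spec.val {R Q : P1 K} (h : Spec φ R Q) {v : HeightOneSpectrum (𝓞 K)} (hv : GoodReductionAt φ v) :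
    ∃ m : K, m ≠ 0 ∧ ∀ P, IsPeriodicPoint φ P → P ≠ Q → 
      ∀ (l : K) (p : Fin 2 → (v.valuation (K := K)).valuationSubring), Prim p → (l ≠ 0) →
        (∀ i, (p i : K) = l * P.rep i) →
      v.valuation K (l * m * Del P.rep R.rep) = 1 := by
  obtain ⟨n0, hn0, hR, hQ, hcase⟩ := h
  obtain ⟨c, hc, F₀, G₀, hF, hG, -, hgood⟩ := hv
  obtain ⟨m, hm, r, hr, hrm⟩ := exists_prim (v.valuation (K := K)).valuationSubring R.rep R.rep_nonzero
  refine ⟨m, hm, fun P hP hPQ l p hp hl hpl => ?_⟩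
  have rp : ∀ (P : P1 K) (l : K) (p : Fin 2 → (v.valuation (K := K)).valuationSubring), l ≠ 0 → Prim p → (∀ i, (p i : K) = l * P.rep i) →
      Rp (v.valuation (K := K)).valuationSubring p P := by
    intro P l p hl hp h
    refine ⟨hp.ne_zero, ?_⟩
    conv_lhs => rw [← P.mk_rep]
    rw [Projectivization.mk_eq_mk_iff']
    refine ⟨l⁻¹, ?_⟩
    ext i
    simp only [Pi.smul_apply, smul_eq_mul, h]
    field_simp
  obtain ⟨n1, hn1, hP⟩ := hP
  have hu := local_unit hc hF hG hgood hn1 hn0 hP hR hQ hPQ hcase hp hr (rp P l p hl hp hpl) (rp R m r hm hr hrm)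
  have h1 := ((Valuation.valuationSubring.integers (v.valuation K)).isUnit_iff_valuation_eq_one).mp hu
  rw [← h1]
  congr 1
  change _ = ((Del p r : (v.valuation (K := K)).valuationSubring) : K)
  simp only [Del]
  push_cast
  rw [hpl, hpl, hrm, hrm]
  ring

theorem rep_del (P Q : P1 K) : Del P.rep Q.rep = 0 ↔ P = Q := by
  have := del_iff P.rep_nonzero Q.rep_nonzero
  rw [P.mk_rep, Q.mk_rep] at this
  exact this

theorem cr_bound (T : Finset (HeightOneSpectrum (𝓞 K))) (hgr : GoodReductionOutside φ T)
    {R₁ R₂ R₃ Q₁ Q₂ Q₃ : P1 K} (h12 : R₁ ≠ R₂) (h13 : R₁ ≠ R₃) (h23 : R₂ ≠ R₃)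
    (h1 : Spec φ R₁ Q₁) (h2 : Spec φ R₂ Q₂) (h3 : Spec φ R₃ Q₃) (W : Finset (P1 K))
    (hW : ∀ P ∈ W, IsPeriodicPoint φ P ∧ P ≠ Q₁ ∧ P ≠ Q₂ ∧ P ≠ Q₃) :
    W.card ≤ 3 * 7 ^ (4 * (T.card + Fintype.card (InfinitePlace K))) := by
  set a := R₁.rep with ha
  set b := R₂.rep with hb
  set c := R₃.rep with hc
  have hab : Del a b ≠ 0 := fun h => h12 ((rep_del _ _).mp h)
  have hac : Del a c ≠ 0 := fun h => h13 ((rep_del _ _).mp h)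
  have hbc : Del b c ≠ 0 := fun h => h23 ((rep_del _ _).mp h)
  have hpa : ∀ P ∈ W, Del P.rep a ≠ 0 := fun P hP h => h1.ne (hW P hP).1 (hW P hP).2.1 ((rep_del _ _).mp h)
  have hpb : ∀ P ∈ W, Del P.rep b ≠ 0 := fun P hP h => h2.ne (hW P hP).1 (hW P hP).2.2.1 ((rep_del _ _).mp h)
  have hpc : ∀ P ∈ W, Del P.rep c ≠ 0 := fun P hP h => h3.ne (hW P hP).1 (hW P hP).2.2.2 ((rep_del _ _).mp h)
  have plu : ∀ p : Fin 2 → K, Del p b * Del a c - Del p a * Del b c = Del p c * Del a b := by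
    intro p; unfold Del; ring
  let z : P1 K → K := fun P => Del P.rep a * Del b c / (Del P.rep b * Del a c)
  have hz1 : ∀ P ∈ W, 1 - z P = Del P.rep c * Del a b / (Del P.rep b * Del a c) := by
    intro P hP
    rw [← plu]
    have := hpb P hP
    simp only [z]
    field_simp
  have hinj : Set.InjOn z W := by
    intro P hP P' hP' h
    have e1 := hpb P hP
    have e2 := hpb P' hP'
    simp only [z] at h
    rw [div_eq_div_iff (mul_ne_zero e1 hac) (mul_ne_zero e2 hac)] at h
    have h4 : Del P.rep a * Del P'.rep b = Del P'.rep a * Del P.rep b := by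
      refine mul_right_cancel₀ (mul_ne_zero hbc hac) ?_
      linear_combination h
    have h5 : Del P.rep P'.rep * Del a b = 0 := by
      have : Del P.rep P'.rep * Del a b = Del P.rep a * Del P'.rep b - Del P'.rep a * Del P.rep b := by
        unfold Del; ring
      rw [this, h4, sub_self]
    exact (rep_del _ _).mp ((mul_eq_zero.mp h5).resolve_right hab)
  rw [← Finset.card_image_of_injOn hinj]
  have hval : ∀ v ∉ T, ∃ g0 g1 : K, ∀ P ∈ W, v.valuation K (z P) = v.valuation K g0 ∧
      v.valuation K (1 - z P) = v.valuation K g1 := by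
    intro v hv
    obtain ⟨m1, hm1, H1⟩ := h1.val (hgr v hv)
    obtain ⟨m2, hm2, H2⟩ := h2.val (hgr v hv)
    obtain ⟨m3, hm3, H3⟩ := h3.val (hgr v hv)
    refine ⟨m2 * Del b c / (m1 * Del a c), m2 * Del a b / (m3 * Del a c), fun P hP => ?_⟩
    obtain ⟨l, hl, p, hp, hpl⟩ := exists_prim (v.valuation (K := K)).valuationSubring P.rep P.rep_nonzero
    obtain ⟨w0, w1, w2, w3⟩ := hW P hP
    have k1 := H1 P w0 w1 l p hp hl hpl
    have k2 := H2 P w0 w2 l p hp hl hpl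
    have k3 := H3 P w0 w3 l p hp hl hpl
    rw [← ha] at k1
    rw [← hb] at k2
    rw [← hc] at k3
    have n1 := hpa P hP
    have n2 := hpb P hP
    have n3 := hpc P hP
    constructor
    · have : z P = (l * m1 * Del P.rep a) / (l * m2 * Del P.rep b) * (m2 * Del b c / (m1 * Del a c)) := by
        simp only [z]
        field_simp
      rw [this, map_mul, map_div₀, k1, k2, div_one, one_mul]
    · have : 1 - z P = (l * m3 * Del P.rep c) / (l * m2 * Del P.rep b) * (m2 * Del a b / (m3 * Del a c)) := by
        rw [hz1 P hP]
        field_simp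
      rw [this, map_mul, map_div₀, k3, k2, div_one, one_mul]
  refine nf_bound T _ ?_ ?_ ?_ ?_
  · intro x hx
    obtain ⟨P, hP, rfl⟩ := Finset.mem_image.mp hx
    exact div_ne_zero (mul_ne_zero (hpa P hP) hbc) (mul_ne_zero (hpb P hP) hac)
  · intro x hx
    obtain ⟨P, hP, rfl⟩ := Finset.mem_image.mp hx
    have : 1 - z P ≠ 0 := by
      rw [hz1 P hP]
      exact div_ne_zero (mul_ne_zero (hpc P hP) hab) (mul_ne_zero (hpb P hP) hac)
    exact fun h => this (by rw [h, sub_self])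
  · intro v hv x hx y hy
    obtain ⟨P, hP, rfl⟩ := Finset.mem_image.mp hx
    obtain ⟨P', hP', rfl⟩ := Finset.mem_image.mp hy
    obtain ⟨g0, g1, hg⟩ := hval v hv
    rw [(hg P hP).1, (hg P' hP').1]
  · intro v hv x hx y hy
    obtain ⟨P, hP, rfl⟩ := Finset.mem_image.mp hx
    obtain ⟨P', hP', rfl⟩ := Finset.mem_image.mp hy
    obtain ⟨g0, g1, hg⟩ := hval v hv
    rw [(hg P hP).2, (hg P' hP').2]
end Fin
end EV

/-- **Theorem.** If there exist three distinct `K`-rational points, each of which is either a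
tail point of `φ` or belongs to a critical cycle of `φ`, then
`|Per(φ,K)| ≤ 3·7^{4|S|} + 3`. -/
theorem per_bound_of_three_special_points
    {K : Type*} [Field K] [NumberField K]
    (T : Finset (HeightOneSpectrum (𝓞 K))) {d : ℕ} (hd : 2 ≤ d)
    (φ : P1Map K d) (hgr : GoodReductionOutside φ T)
    (R₁ R₂ R₃ : P1 K) (h12 : R₁ ≠ R₂) (h13 : R₁ ≠ R₃) (h23 : R₂ ≠ R₃)
    (h1 : IsTailPoint φ R₁ ∨ InCriticalCycle φ R₁)
    (h2 : IsTailPoint φ R₂ ∨ InCriticalCycle φ R₂)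
    (h3 : IsTailPoint φ R₃ ∨ InCriticalCycle φ R₃) :
    {P : P1 K | IsPeriodicPoint φ P}.Finite ∧
      {P : P1 K | IsPeriodicPoint φ P}.ncard ≤ 3 * 7 ^ (4 * sCard K T) + 3 := by
  obtain ⟨Q₁, s1⟩ := EV.exists_spec h1
  obtain ⟨Q₂, s2⟩ := EV.exists_spec h2
  obtain ⟨Q₃, s3⟩ := EV.exists_spec h3
  set U : Set (P1 K) := {P : P1 K | IsPeriodicPoint φ P} with hU
  set V : Finset (P1 K) := {Q₁, Q₂, Q₃} with hV
  have hVc : V.card ≤ 3 := Finset.card_le_three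
  have key : ∀ W : Finset (P1 K), (W : Set (P1 K)) ⊆ U \ V → W.card ≤ 3 * 7 ^ (4 * sCard K T) := by
    intro W hW
    refine EV.cr_bound T hgr h12 h13 h23 s1 s2 s3 W fun P hP => ?_
    obtain ⟨hp, hq⟩ := hW hP
    simp only [hV, Finset.coe_insert, Finset.coe_singleton, Set.mem_insert_iff, Set.mem_singleton_iff, not_or] at hq
    exact ⟨hp, hq⟩
  have hfin : (U \ V).Finite := by
    by_contra hinf
    obtain ⟨W, hW, hc⟩ := Set.Infinite.exists_subset_card_eq hinf (3 * 7 ^ (4 * sCard K T) + 1)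
    have := key W hW
    omega
  have hUf : U.Finite := by
    refine (hfin.union V.finite_toSet).subset ?_
    intro x hx
    by_cases h : x ∈ (V : Set (P1 K))
    · exact Or.inr h
    · exact Or.inl ⟨hx, h⟩
  refine ⟨hUf, ?_⟩
  have hc := key hfin.toFinset (by rw [Set.Finite.coe_toFinset])
  rw [← Set.ncard_eq_toFinset_card _ hfin] at hc
  have h4 := Set.ncard_le_ncard_sdiff_add_ncard U (V : Set (P1 K)) V.finite_toSet
  rw [Set.ncard_coe_finset] at h4
  omega
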